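/- arXiv:2403.14875 — 2 statements merged into one kernel-verified Lean document; each statement's English description precedes it below -/
import Mathlib

section
/- Let n ≥ 6. The upper-left-corner problem for matrix groups over ℚ is undecidable: there is no computable function which, given as input a finite list X of invertible n×n matrices with rational entries, decides whether the subgroup ⟨X⟩ of GL_n(ℚ) generated by X contains a matrix whose (1,1)-entry equals 0. -/
/-- Rational matrices are primcodable (natural effective encoding of matrices). -/
noncomputable instance matQPrimcodable (n : ℕ) :
    Primcodable (Matrix (Fin n) (Fin n) ℚ) :=
  Primcodable.finArrow

theorem primrecPred_coprime : PrimrecPred fun x : ℕ × ℕ => 0 < x.2 ∧ Nat.Coprime x.1 x.2 := by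
  have hR : PrimrecRel fun (d : ℕ) (x : ℕ × ℕ) => ¬ x.1 % d = 0 ∨ ¬ x.2 % d = 0 ∨ d = 1 := by
    have h1 : Primrec fun y : ℕ × (ℕ × ℕ) => y.2.1 % y.1 :=
      Primrec.nat_mod.comp (Primrec.fst.comp Primrec.snd) Primrec.fst
    have h2 : Primrec fun y : ℕ × (ℕ × ℕ) => y.2.2 % y.1 :=
      Primrec.nat_mod.comp (Primrec.snd.comp Primrec.snd) Primrec.fst
    exact (Primrec.eq.comp h1 (Primrec.const 0)).not.or
      ((Primrec.eq.comp h2 (Primrec.const 0)).not.or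
        (Primrec.eq.comp Primrec.fst (Primrec.const 1)))
  have h := hR.forall_mem_list.comp
    (Primrec.list_range.comp (Primrec.succ.comp (Primrec.snd (α := ℕ) (β := ℕ)))) Primrec.id
  refine ((Primrec.nat_lt.comp (Primrec.const 0) Primrec.snd).and h).of_eq ?_
  rintro ⟨a, b⟩
  simp only [id]
  refine and_congr_right fun hb => ?_
  rw [Nat.coprime_iff_gcd_eq_one]
  constructor
  · intro H
    have hd := H (Nat.gcd a b) (List.mem_range.2 <| Nat.lt_succ_of_le (Nat.gcd_le_right _ hb))
    simpa [Nat.mod_eq_zero_of_dvd (Nat.gcd_dvd_left a b),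
      Nat.mod_eq_zero_of_dvd (Nat.gcd_dvd_right a b)] using hd
  · intro H d _
    by_contra! hd
    exact hd.2.2 (Nat.dvd_one.1 (H ▸ Nat.dvd_gcd (Nat.dvd_of_mod_eq_zero hd.1)
      (Nat.dvd_of_mod_eq_zero hd.2.1)))

theorem mem_range_encode_rat (m : ℕ) :
    m ∈ Set.range (@Encodable.encode ℚ Rat.instEncodable) ↔
      0 < m.unpair.2 ∧ Nat.Coprime ((m.unpair.1 + 1) / 2) m.unpair.2 := by
  have key : ∀ z : ℤ, (Equiv.intEquivNat z + 1) / 2 = z.natAbs := by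
    rintro (k | k)
    · change (2 * k + 1) / 2 = k
      omega
    · change (2 * k + 1 + 1) / 2 = k + 1
      omega
  constructor
  · rintro ⟨q, rfl⟩
    change 0 < (Nat.unpair (Nat.pair (Equiv.intEquivNat q.num) q.den)).2 ∧ _
    change _ ∧ Nat.Coprime (((Nat.unpair (Nat.pair (Equiv.intEquivNat q.num) q.den)).1 + 1) / 2)
      (Nat.unpair (Nat.pair (Equiv.intEquivNat q.num) q.den)).2
    rw [Nat.unpair_pair, key]
    exact ⟨q.den_pos, q.reduced⟩
  · rintro ⟨h0, hc⟩
    have hk := key (Equiv.intEquivNat.symm m.unpair.1)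
    rw [Equiv.apply_symm_apply] at hk
    rw [hk] at hc
    refine ⟨⟨Equiv.intEquivNat.symm m.unpair.1, m.unpair.2, h0.ne', hc⟩, ?_⟩
    change Nat.pair (Equiv.intEquivNat (Equiv.intEquivNat.symm m.unpair.1)) m.unpair.2 = m
    rw [Equiv.apply_symm_apply, Nat.pair_unpair]

theorem primrec_intCast_rat : Primrec (fun z : ℤ => (z : ℚ)) := by
  classical
  have hp : PrimrecPred fun m : ℕ => m ∈ Set.range (@Encodable.encode ℚ Rat.instEncodable) := by
    have h1 : Primrec fun m : ℕ => ((m.unpair.1 + 1) / 2, m.unpair.2) :=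
      Primrec.pair (Primrec.nat_div.comp
        (Primrec.succ.comp (Primrec.fst.comp Primrec.unpair)) (Primrec.const 2))
        (Primrec.snd.comp Primrec.unpair)
    exact (primrecPred_coprime.comp h1).of_eq fun m => (mem_range_encode_rat m).symm
  let := @Encodable.decidableRangeEncode ℚ Rat.instEncodable
  have h2 : Primrec fun z : ℤ => Nat.pair (@Encodable.encode ℤ Primcodable.toEncodable z) 1 :=
    Primrec₂.natPair.comp Primrec.encode (Primrec.const 1)
  have h3 := Primrec.list_length.comp ((Primrec.listFilter hp).comp (Primrec.list_range.comp h2))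
  rw [← Primrec.encode_iff]
  refine h3.of_eq fun z => ?_
  rw [← List.countP_eq_length_filter]
  rfl

theorem primrec_affine_int (α β : ℤ) : Primrec (fun k : ℕ => α + β * (k : ℤ)) := by
  have hsub : Primrec₂ (fun a b : ℕ => (a : ℤ) - b) := by
    rw [← Primrec₂.encode_iff]
    have h := Primrec.ite (Primrec.nat_le.comp Primrec.snd Primrec.fst)
      (Primrec.nat_double.comp (Primrec.nat_sub.comp (Primrec.fst (α := ℕ) (β := ℕ)) Primrec.snd))
      (Primrec.nat_double_succ.comp (Primrec.pred.comp
        (Primrec.nat_sub.comp (Primrec.snd (α := ℕ) (β := ℕ)) Primrec.fst)))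
    refine h.of_eq ?_
    rintro ⟨a, b⟩
    by_cases hab : b ≤ a
    · obtain ⟨c, rfl⟩ := Nat.exists_eq_add_of_le hab
      have : ((b + c : ℕ) : ℤ) - (b : ℤ) = Int.ofNat c := by simp
      simp only [if_pos hab, this, Nat.add_sub_cancel_left]
      rfl
    · obtain ⟨c, rfl⟩ := Nat.exists_eq_add_of_lt (not_le.1 hab)
      have : (a : ℤ) - ((a + c + 1 : ℕ) : ℤ) = Int.negSucc c := by
        rw [Int.negSucc_eq]; push_cast; ring
      have h2 : a + c + 1 - a = c + 1 := by omega
      simp only [if_neg hab, this, h2, Nat.pred_succ]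
      rfl
  have hlin : ∀ a b : ℕ, Primrec fun k : ℕ => a + b * k := fun a b =>
    Primrec.nat_add.comp (Primrec.const a) (Primrec.nat_mul.comp (Primrec.const b) Primrec.id)
  refine (hsub.comp (hlin α.toNat β.toNat) (hlin (-α).toNat (-β).toNat)).of_eq fun k => ?_
  have ha := Int.toNat_sub_toNat_neg α
  have hb := Int.toNat_sub_toNat_neg β
  push_cast
  linear_combination ha + k * hb

theorem computable_affine_matrix {n : ℕ} (A B : Matrix (Fin n) (Fin n) ℤ) {g : ℕ → ℕ}
    (hg : Computable g) :
    Computable fun k => (A + (g k : ℤ) • B).map (Int.cast : ℤ → ℚ) := by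
  have h : ∀ i, Primrec fun k : ℕ =>
      (fun j => ((A i j + B i j * (k : ℤ) : ℤ) : ℚ) : Fin n → ℚ) := by
    intro i
    have h := fun j => primrec_intCast_rat.comp (primrec_affine_int (A i j) (B i j))
    exact Primrec.fin_curry.2 ((Primrec.fin_curry₁.2 h).swap)
  have h2 : Primrec fun k : ℕ =>
      (fun i j => ((A i j + B i j * (k : ℤ) : ℤ) : ℚ) : Fin n → Fin n → ℚ) :=
    Primrec.fin_curry.2 ((Primrec.fin_curry₁.2 h).swap)
  have h3 : Primrec fun k : ℕ => (A + (k : ℤ) • B).map (Int.cast : ℤ → ℚ) := by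
    refine h2.of_eq fun k => ?_
    ext i j
    change _ = ((A i j + (k : ℤ) * B i j : ℤ) : ℚ)
    rw [mul_comm (k : ℤ)]
  exact h3.to_comp.comp hg

section Corner

open scoped Kronecker

theorem six_le_abs_mul_sub {i j : ℕ} (h : i ≠ j) : 6 ≤ |6 * (i : ℤ) - 6 * j| := by
  rcases lt_or_gt_of_ne h with h | h
  · rw [abs_of_neg (by omega)]; omega
  · rw [abs_of_pos (by omega)]; omega

/-- The `k`-th power of the parabolic matrix fixing the line spanned by `(C, 1)`. -/
def parabolic (C k : ℤ) : Matrix (Fin 2) (Fin 2) ℤ :=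
  !![1 + k * C, -k * C ^ 2; k, 1 - k * C]

theorem parabolic_mul (C k l : ℤ) : parabolic C k * parabolic C l = parabolic C (k + l) := by
  ext i j
  fin_cases i <;> fin_cases j <;> simp [parabolic, Matrix.mul_apply, Fin.sum_univ_two] <;> ring

theorem parabolic_zero (C : ℤ) : parabolic C 0 = 1 := by
  ext i j
  fin_cases i <;> fin_cases j <;> simp [parabolic]

/-- `parabolic C 1` as an invertible matrix. -/
def parabolicUnit (C : ℤ) : (Matrix (Fin 2) (Fin 2) ℤ)ˣ where
  val := parabolic C 1
  inv := parabolic C (-1)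
  val_inv := by rw [parabolic_mul]; exact parabolic_zero C
  inv_val := by rw [parabolic_mul]; exact parabolic_zero C

theorem parabolicUnit_pow (C : ℤ) (k : ℕ) :
    ((parabolicUnit C ^ k : (Matrix (Fin 2) (Fin 2) ℤ)ˣ) : Matrix (Fin 2) (Fin 2) ℤ)
      = parabolic C k := by
  induction k with
  | zero => simp [parabolic_zero]
  | succ k ih =>
    rw [pow_succ, Units.val_mul, ih]
    change parabolic C k * parabolic C 1 = _
    rw [parabolic_mul]
    push_cast
    rfl

section PingPong

variable {γ : Type*} (idx : γ → ℕ)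

/-- The representation of a free group sending each letter to its parabolic matrix. -/
def freeRep : FreeGroup γ →* (Matrix (Fin 2) (Fin 2) ℤ)ˣ :=
  FreeGroup.lift fun i => parabolicUnit (6 * idx i)

/-- The region of the plane attracting the letter with fixed line `(C, 1)` and exponent `ε`. -/
def InRegion (C ε p q : ℤ) : Prop :=
  p - C * q ≠ 0 ∧ (p - C * q) * (p - C * q) < 3 * (ε * q * (p - C * q))

theorem InRegion.abs_lt {C ε p q : ℤ} (hε : |ε| = 1) (h : InRegion C ε p q) :
    |p - C * q| < 3 * |q| := by
  obtain ⟨h0, h1⟩ := h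
  have h2 : ε * q * (p - C * q) ≤ |q| * |p - C * q| := by
    calc ε * q * (p - C * q) ≤ |ε * q * (p - C * q)| := le_abs_self _
      _ = _ := by rw [abs_mul, abs_mul, hε, one_mul]
  have h3 : |p - C * q| * |p - C * q| < 3 * |q| * |p - C * q| := by
    rw [abs_mul_abs_self]; linarith
  exact lt_of_mul_lt_mul_right h3 (abs_nonneg _)

theorem inRegion_of_abs_le {C ε p q : ℤ} (hε : |ε| = 1) (h0 : p - C * q ≠ 0)
    (h : 3 * |q| ≤ |p - C * q|) :
    InRegion C ε ((1 + ε * C) * p + (-ε * C ^ 2) * q) (ε * p + (1 - ε * C) * q) := by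
  have hε2 : ε * ε = 1 := by rw [← abs_mul_abs_self, hε, one_mul]
  have e1 : ((1 + ε * C) * p + (-ε * C ^ 2) * q) - C * (ε * p + (1 - ε * C) * q) = p - C * q := by
    ring
  refine ⟨by rwa [e1], ?_⟩
  rw [e1]
  have h2 : -(|q| * |p - C * q|) ≤ ε * q * (p - C * q) := by
    have := neg_abs_le (ε * q * (p - C * q))
    rwa [abs_mul, abs_mul, hε, one_mul] at this
  have h3 : 3 * |q| * |p - C * q| ≤ |p - C * q| * |p - C * q| :=
    mul_le_mul_of_nonneg_right h (abs_nonneg _)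
  rw [abs_mul_abs_self] at h3
  have h4 : 0 < (p - C * q) * (p - C * q) := mul_self_pos.2 h0
  have e2 : ε * (ε * p + (1 - ε * C) * q) * (p - C * q)
      = ε * q * (p - C * q) + (ε * ε) * ((p - C * q) * (p - C * q)) := by ring
  rw [e2, hε2]
  linarith

theorem InRegion.step_same {C ε p q : ℤ} (hε : |ε| = 1) (h : InRegion C ε p q) :
    InRegion C ε ((1 + ε * C) * p + (-ε * C ^ 2) * q) (ε * p + (1 - ε * C) * q) := by
  have hε2 : ε * ε = 1 := by rw [← abs_mul_abs_self, hε, one_mul]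
  have e1 : ((1 + ε * C) * p + (-ε * C ^ 2) * q) - C * (ε * p + (1 - ε * C) * q) = p - C * q := by
    ring
  obtain ⟨h0, h1⟩ := h
  refine ⟨by rwa [e1], ?_⟩
  rw [e1]
  have h4 : 0 < (p - C * q) * (p - C * q) := mul_self_pos.2 h0
  have e2 : ε * (ε * p + (1 - ε * C) * q) * (p - C * q)
      = ε * q * (p - C * q) + (ε * ε) * ((p - C * q) * (p - C * q)) := by ring
  rw [e2, hε2]
  linarith

theorem InRegion.step_ne {C C' ε ε' p q : ℤ} (hC : 6 ≤ |C - C'|) (hε : |ε| = 1) (hε' : |ε'| = 1)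
    (h : InRegion C ε p q) :
    InRegion C' ε' ((1 + ε' * C') * p + (-ε' * C' ^ 2) * q) (ε' * p + (1 - ε' * C') * q) := by
  have h1 := h.abs_lt hε
  have h2 : 6 * |q| ≤ |C - C'| * |q| := mul_le_mul_of_nonneg_right hC (abs_nonneg _)
  rw [← abs_mul] at h2
  have h3 : |(C - C') * q| ≤ |p - C' * q| + |p - C * q| := by
    have : (C - C') * q = (p - C' * q) - (p - C * q) := by ring
    rw [this]
    exact abs_sub _ _
  have h4 : 3 * |q| < |p - C' * q| := by linarith
  refine inRegion_of_abs_le hε' (fun h0 => ?_) h4.le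
  rw [h0, abs_zero] at h4
  linarith [abs_nonneg q]

/-- The exponent `±1` of a letter. -/
def letterSign (b : Bool) : ℤ := cond b 1 (-1)

theorem abs_letterSign (b : Bool) : |letterSign b| = 1 := by cases b <;> rfl

theorem freeRep_cons (i : γ) (b : Bool) (L : List (γ × Bool)) :
    (freeRep idx (FreeGroup.mk ((i, b) :: L)) : Matrix (Fin 2) (Fin 2) ℤ)
      = parabolic (6 * idx i) (letterSign b) * (freeRep idx (FreeGroup.mk L)).val := by
  have : FreeGroup.mk ((i, b) :: L) = FreeGroup.mk [(i, b)] * FreeGroup.mk L := by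
    rw [FreeGroup.mul_mk]; rfl
  rw [this, map_mul, Units.val_mul]
  congr 1
  cases b <;> simp [freeRep, FreeGroup.lift_mk, -Matrix.coe_units_inv] <;> rfl

theorem freeRep_inRegion (hidx : Function.Injective idx) (L : List (γ × Bool)) :
    ∀ (i : γ) (b : Bool), FreeGroup.IsReduced ((i, b) :: L) →
    InRegion (6 * idx i) (letterSign b)
      ((freeRep idx (FreeGroup.mk ((i, b) :: L))).val 0 0)
      ((freeRep idx (FreeGroup.mk ((i, b) :: L))).val 1 0) := by
  induction L with
  | nil =>
    intro i b _
    rw [freeRep_cons]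
    have h := inRegion_of_abs_le (C := 6 * idx i) (ε := letterSign b) (p := 1) (q := 0)
      (abs_letterSign b) (by simp) (by simp)
    rw [show FreeGroup.mk ([] : List (γ × Bool)) = 1 from rfl, map_one]
    simpa [parabolic] using h
  | cons a L ih =>
    obtain ⟨j, c⟩ := a
    intro i b hred
    have hred' : FreeGroup.IsReduced ((j, c) :: L) := List.IsChain.of_cons hred
    have hhead : j = i → c = b := by
      have := (List.isChain_cons_cons.1 hred).1
      intro h
      exact (this h.symm).symm
    have hprev := ih j c hred'
    rw [freeRep_cons]
    have e0 : ∀ M : Matrix (Fin 2) (Fin 2) ℤ, ∀ C k : ℤ, (parabolic C k * M) 0 0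
        = (1 + k * C) * M 0 0 + (-k * C ^ 2) * M 1 0 := by
      intro M C k; simp [parabolic, Matrix.mul_apply, Fin.sum_univ_two]
    have e1 : ∀ M : Matrix (Fin 2) (Fin 2) ℤ, ∀ C k : ℤ, (parabolic C k * M) 1 0
        = k * M 0 0 + (1 - k * C) * M 1 0 := by
      intro M C k; simp [parabolic, Matrix.mul_apply, Fin.sum_univ_two]
    rw [e0, e1]
    by_cases hij : j = i
    · obtain rfl := hhead hij
      subst hij
      exact hprev.step_same (abs_letterSign _)
    · exact hprev.step_ne (six_le_abs_mul_sub (hidx.ne hij)) (abs_letterSign _) (abs_letterSign _)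

theorem freeRep_one_zero_eq_zero_iff (hidx : Function.Injective idx) (w : FreeGroup γ) :
    (freeRep idx w).val 1 0 = 0 ↔ w = 1 := by
  classical
  constructor
  · intro h
    by_contra hw
    have hne : w.toWord ≠ [] := fun h => hw (FreeGroup.toWord_eq_nil_iff.1 h)
    obtain ⟨⟨i, b⟩, L, hL⟩ := List.exists_cons_of_ne_nil hne
    have hreg := freeRep_inRegion idx hidx L i b (hL ▸ FreeGroup.isReduced_toWord)
    rw [← hL, FreeGroup.mk_toWord] at hreg
    have := hreg.abs_lt (abs_letterSign b)
    rw [h, abs_zero, mul_zero] at this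
    exact absurd this (not_lt.2 (abs_nonneg _))
  · rintro rfl
    simp

end PingPong

/-- A change of basis of `ℤ² ⊗ ℤ²` whose first row is the determinant form. -/
def cornerBasis : Matrix (Fin 2 × Fin 2) (Fin 2 × Fin 2) ℤ :=
  (!![0, 1, -1, 0; 1, -1, 1, 0; 0, 0, 1, 0; 0, 0, 0, 1] : Matrix (Fin 4) (Fin 4) ℤ).submatrix
    finProdFinEquiv finProdFinEquiv

/-- The inverse of `cornerBasis`. -/
def cornerBasisInv : Matrix (Fin 2 × Fin 2) (Fin 2 × Fin 2) ℤ :=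
  (!![1, 1, 0, 0; 1, 0, 1, 0; 0, 0, 1, 0; 0, 0, 0, 1] : Matrix (Fin 4) (Fin 4) ℤ).submatrix
    finProdFinEquiv finProdFinEquiv

theorem cornerBasis_mul_inv : cornerBasis * cornerBasisInv = 1 := by
  decide

theorem cornerBasisInv_mul : cornerBasisInv * cornerBasis = 1 := by
  decide

/-- An enumeration of a basis of `ℤ² ⊗ ℤ² ⊕ ℤⁿ⁻⁴` starting at the corner. -/
def cornerEquiv {n : ℕ} (hn : 4 ≤ n) : (Fin 2 × Fin 2) ⊕ Fin (n - 4) ≃ Fin n :=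
  (finProdFinEquiv.sumCongr (Equiv.refl _)).trans
    (finSumFinEquiv.trans (finCongr (by omega)))

theorem cornerEquiv_symm_zero {n : ℕ} (hn : 4 ≤ n) :
    (cornerEquiv hn).symm ⟨0, by omega⟩ = Sum.inl (0, 0) := by
  rw [Equiv.symm_apply_eq]
  rfl

/-- The block matrix with blocks `a ⊗ b`, in the corner basis, and the identity. -/
def cornerMatrix {n : ℕ} (hn : 4 ≤ n) (a b : Matrix (Fin 2) (Fin 2) ℤ) :
    Matrix (Fin n) (Fin n) ℤ :=
  (Matrix.fromBlocks (cornerBasis * (a ⊗ₖ b) * cornerBasisInv) 0 0 1).submatrix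
    (cornerEquiv hn).symm (cornerEquiv hn).symm

theorem cornerMatrix_one {n : ℕ} (hn : 4 ≤ n) : cornerMatrix hn 1 1 = 1 := by
  simp [cornerMatrix, cornerBasis_mul_inv]

theorem cornerMatrix_mul {n : ℕ} (hn : 4 ≤ n) (a b a' b' : Matrix (Fin 2) (Fin 2) ℤ) :
    cornerMatrix hn (a * a') (b * b') = cornerMatrix hn a b * cornerMatrix hn a' b' := by
  have h : cornerBasis * ((a * a') ⊗ₖ (b * b')) * cornerBasisInv
      = (cornerBasis * (a ⊗ₖ b) * cornerBasisInv) *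
        (cornerBasis * (a' ⊗ₖ b') * cornerBasisInv) := by
    rw [Matrix.mul_kronecker_mul]
    simp only [Matrix.mul_assoc]
    rw [← Matrix.mul_assoc cornerBasisInv cornerBasis, cornerBasisInv_mul, Matrix.one_mul]
  simp only [cornerMatrix]
  rw [Matrix.submatrix_mul_equiv, Matrix.fromBlocks_multiply, h]
  simp

theorem cornerMatrix_corner {n : ℕ} (hn : 4 ≤ n) (a b : Matrix (Fin 2) (Fin 2) ℤ) :
    cornerMatrix hn a b ⟨0, by omega⟩ ⟨0, by omega⟩
      = a 0 0 * (b 1 0 + b 1 1) - a 1 0 * (b 0 0 + b 0 1) := by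
  simp only [cornerMatrix, Matrix.submatrix_apply, cornerEquiv_symm_zero,
    Matrix.fromBlocks_apply₁₁, Matrix.mul_apply, Fintype.sum_prod_type, Fin.sum_univ_two]
  simp [cornerBasis, cornerBasisInv, finProdFinEquiv]
  ring

theorem exists_cornerMatrix_parabolic_eq {n : ℕ} (hn : 4 ≤ n) (A : Matrix (Fin 2) (Fin 2) ℤ)
    (C : ℤ) : ∃ X Y : Matrix (Fin n) (Fin n) ℤ, ∀ k : ℤ,
      cornerMatrix hn 1 (A * parabolic C k) = X + k • Y := by
  refine ⟨cornerMatrix hn 1 A,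
    (Matrix.fromBlocks (cornerBasis * (1 ⊗ₖ (A * !![C, -C ^ 2; 1, -C])) * cornerBasisInv)
      0 0 0).submatrix (cornerEquiv hn).symm (cornerEquiv hn).symm, fun k => ?_⟩
  have h : parabolic C k = 1 + k • !![C, -C ^ 2; 1, -C] := by
    ext i j
    fin_cases i <;> fin_cases j <;> simp [parabolic] <;> ring
  have hs : ∀ M : Matrix ((Fin 2 × Fin 2) ⊕ Fin (n - 4)) ((Fin 2 × Fin 2) ⊕ Fin (n - 4)) ℤ,
      k • M.submatrix (cornerEquiv hn).symm (cornerEquiv hn).symm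
        = (k • M).submatrix (cornerEquiv hn).symm (cornerEquiv hn).symm := fun _ => rfl
  have ha : ∀ M N : Matrix ((Fin 2 × Fin 2) ⊕ Fin (n - 4)) ((Fin 2 × Fin 2) ⊕ Fin (n - 4)) ℤ,
      M.submatrix (cornerEquiv hn).symm (cornerEquiv hn).symm
        + N.submatrix (cornerEquiv hn).symm (cornerEquiv hn).symm
        = (M + N).submatrix (cornerEquiv hn).symm (cornerEquiv hn).symm := fun _ _ => rfl
  rw [h, cornerMatrix, cornerMatrix, hs, ha, Matrix.fromBlocks_smul, Matrix.fromBlocks_add]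
  simp only [mul_add, mul_one, Matrix.mul_smul, Matrix.kronecker_add, Matrix.kronecker_smul,
    add_mul, Matrix.smul_mul, smul_zero, add_zero]

/-- `cornerMatrix`, with rational entries, as a monoid homomorphism. -/
def cornerMonoidHom {n : ℕ} (hn : 4 ≤ n) :
    Matrix (Fin 2) (Fin 2) ℤ × Matrix (Fin 2) (Fin 2) ℤ →* Matrix (Fin n) (Fin n) ℚ where
  toFun p := (cornerMatrix hn p.1 p.2).map (Int.castRingHom ℚ)
  map_one' := by
    rw [Prod.fst_one, Prod.snd_one, cornerMatrix_one]
    exact Matrix.map_one _ (map_zero _) (map_one _)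
  map_mul' p q := by
    rw [Prod.fst_mul, Prod.snd_mul, cornerMatrix_mul, Matrix.map_mul]

/-- `cornerMatrix` as a homomorphism into `GL n ℚ`. -/
def cornerHom {n : ℕ} (hn : 4 ≤ n) :
    (Matrix (Fin 2) (Fin 2) ℤ)ˣ × (Matrix (Fin 2) (Fin 2) ℤ)ˣ →* GL (Fin n) ℚ :=
  (Units.map (cornerMonoidHom hn)).comp MulEquiv.prodUnits.symm.toMonoidHom

end Corner

section Mikhailova

variable {γ : Type*}

/-- Generators of the fibre product of two copies of the group presented by `γ` and `R`. -/
def mikhailovaGenerators (R : Set (FreeGroup γ)) : Set (FreeGroup γ × FreeGroup γ) :=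
  Set.range (fun i => (FreeGroup.of i, FreeGroup.of i)) ∪ (fun r => (1, r)) '' R

theorem mikhailovaGenerators_insert (r : FreeGroup γ) (R : Set (FreeGroup γ)) :
    mikhailovaGenerators (insert r R) = insert (1, r) (mikhailovaGenerators R) := by
  rw [mikhailovaGenerators, mikhailovaGenerators, Set.image_insert_eq, Set.union_insert]

theorem mk_fst_eq_mk_snd_of_mem_closure {R : Set (FreeGroup γ)} {p : FreeGroup γ × FreeGroup γ}
    (hp : p ∈ Subgroup.closure (mikhailovaGenerators R)) :
    QuotientGroup.mk' (Subgroup.normalClosure R) p.1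
      = QuotientGroup.mk' (Subgroup.normalClosure R) p.2 := by
  have h : Subgroup.closure (mikhailovaGenerators R) ≤
      ((QuotientGroup.mk' (Subgroup.normalClosure R)).comp
        (MonoidHom.fst (FreeGroup γ) (FreeGroup γ))).eqLocus
      ((QuotientGroup.mk' (Subgroup.normalClosure R)).comp
        (MonoidHom.snd (FreeGroup γ) (FreeGroup γ))) := by
    rw [Subgroup.closure_le]
    rintro _ (⟨i, rfl⟩ | ⟨r, hr, rfl⟩)
    · rfl
    · change QuotientGroup.mk' (Subgroup.normalClosure R) 1
        = QuotientGroup.mk' (Subgroup.normalClosure R) r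
      rw [map_one, eq_comm, QuotientGroup.mk'_apply, QuotientGroup.eq_one_iff]
      exact Subgroup.subset_normalClosure hr
  exact h hp

theorem diag_mem_closure (R : Set (FreeGroup γ)) (w : FreeGroup γ) :
    (w, w) ∈ Subgroup.closure (mikhailovaGenerators R) := by
  induction w using FreeGroup.induction_on with
  | C1 => exact one_mem _
  | of i => exact Subgroup.subset_closure (Or.inl ⟨i, rfl⟩)
  | inv_of i h => exact inv_mem h
  | mul a b ha hb => exact mul_mem ha hb

theorem one_prod_mem_closure {R : Set (FreeGroup γ)} {w : FreeGroup γ}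
    (hw : w ∈ Subgroup.normalClosure R) :
    (1, w) ∈ Subgroup.closure (mikhailovaGenerators R) := by
  let K := (Subgroup.closure (mikhailovaGenerators R)).comap
    (MonoidHom.inr (FreeGroup γ) (FreeGroup γ))
  have hK : K.Normal := by
    refine ⟨fun v hv g => ?_⟩
    have hg := diag_mem_closure R g
    have h := mul_mem (mul_mem hg hv) (inv_mem hg)
    simpa [K, Subgroup.mem_comap] using h
  have hR : R ⊆ K := fun r hr => Subgroup.subset_closure (Or.inr ⟨r, hr, rfl⟩)
  exact Subgroup.normalClosure_le_normal hR hw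

variable {n : ℕ} (hn : 4 ≤ n) {idx : γ → ℕ} {z : γ}

theorem cornerMatrix_freeRep_eq_zero_iff (hidx : Function.Injective idx) (hz : idx z = 0)
    (a b : FreeGroup γ) :
    cornerMatrix hn (freeRep idx a).val (freeRep idx b).val ⟨0, by omega⟩ ⟨0, by omega⟩ = 0
      ↔ a⁻¹ * b * FreeGroup.of z = 1 := by
  have h : (freeRep idx a).val * (freeRep idx (a⁻¹ * b * FreeGroup.of z)).val
      = (freeRep idx b).val * parabolic 0 1 := by
    rw [← Units.val_mul, ← map_mul, ← mul_assoc, ← mul_assoc, mul_inv_cancel, one_mul, map_mul,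
      Units.val_mul]
    simp [freeRep, parabolicUnit, hz]
  have h0 := congrFun (congrFun h 0) 0
  have h1 := congrFun (congrFun h 1) 0
  simp only [Matrix.mul_apply, Fin.sum_univ_two, parabolic, Matrix.of_apply, Matrix.cons_val',
    Matrix.cons_val_zero, Matrix.cons_val_one, Matrix.cons_val_fin_one] at h0 h1
  have hdet : (freeRep idx a).val.det ≠ 0 :=
    ((Matrix.isUnit_iff_isUnit_det _).1 (freeRep idx a).isUnit).ne_zero
  rw [← freeRep_one_zero_eq_zero_iff idx hidx, cornerMatrix_corner]
  rw [Matrix.det_fin_two] at hdet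
  have key : (freeRep idx a).val 0 0 * ((freeRep idx b).val 1 0 + (freeRep idx b).val 1 1)
      - (freeRep idx a).val 1 0 * ((freeRep idx b).val 0 0 + (freeRep idx b).val 0 1)
      = ((freeRep idx a).val 0 0 * (freeRep idx a).val 1 1
        - (freeRep idx a).val 0 1 * (freeRep idx a).val 1 0)
        * (freeRep idx (a⁻¹ * b * FreeGroup.of z)).val 1 0 := by
    linear_combination (freeRep idx a).val 1 0 * h0 - (freeRep idx a).val 0 0 * h1
  rw [key, mul_eq_zero, or_iff_right hdet]

theorem exists_mem_closure_cornerMatrix_eq_zero_iff (hidx : Function.Injective idx) (hz : idx z = 0)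
    (R : Set (FreeGroup γ)) :
    (∃ p ∈ Subgroup.closure (mikhailovaGenerators R),
      cornerMatrix hn (freeRep idx p.1).val (freeRep idx p.2).val ⟨0, by omega⟩ ⟨0, by omega⟩ = 0)
      ↔ FreeGroup.of z ∈ Subgroup.normalClosure R := by
  simp only [cornerMatrix_freeRep_eq_zero_iff hn hidx hz]
  constructor
  · rintro ⟨⟨a, b⟩, hp, h⟩
    have h1 := mk_fst_eq_mk_snd_of_mem_closure hp
    have h2 : FreeGroup.of z = b⁻¹ * a := by
      rw [mul_eq_one_iff_eq_inv'] at h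
      simpa using h
    rw [h2, ← QuotientGroup.eq]
    exact h1.symm
  · intro h
    refine ⟨(1, (FreeGroup.of z)⁻¹), ?_, by simp⟩
    exact one_prod_mem_closure (inv_mem h)

/-- The homomorphism `(a, b) ↦ ρ(a) ⊗ ρ(b) ⊕ 1` in the corner basis. -/
def freeCornerHom (idx : γ → ℕ) : FreeGroup γ × FreeGroup γ →* GL (Fin n) ℚ :=
  (cornerHom hn).comp ((freeRep idx).prodMap (freeRep idx))

end Mikhailova

theorem computablePred_mem_normalClosure {n : ℕ} (hn : 4 ≤ n)
    {f : List (Matrix (Fin n) (Fin n) ℚ) → Bool} (hf : Computable f)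
    (hspec : ∀ X : List (Matrix (Fin n) (Fin n) ℚ), (∀ M ∈ X, IsUnit M) →
      (f X = true ↔ ∃ g ∈ Subgroup.closure
        {g : GL (Fin n) ℚ | (g : Matrix (Fin n) (Fin n) ℚ) ∈ X},
        (g : Matrix (Fin n) (Fin n) ℚ) ⟨0, by omega⟩ ⟨0, by omega⟩ = 0))
    {γ : Type*} [Finite γ] {R : Set (FreeGroup γ)} (hR : R.Finite) (x y z : γ) {g : ℕ → ℕ}
    (hg : Computable g) :
    ComputablePred fun k => FreeGroup.of z ∈ Subgroup.normalClosure
      (insert ((FreeGroup.of y)⁻¹ * FreeGroup.of x ^ g k) R) := by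
  classical
  obtain ⟨e⟩ := nonempty_encodable γ
  let idx : γ → ℕ := fun i => if i = z then 0 else Encodable.encode i + 1
  have hz : idx z = 0 := if_pos rfl
  have hidx : Function.Injective idx := by
    intro i j h
    by_cases hi : i = z <;> by_cases hj : j = z <;> simp_all [idx]
  let φ : FreeGroup γ × FreeGroup γ →* GL (Fin n) ℚ := freeCornerHom hn idx
  have hfin : ((fun p => (φ p : Matrix (Fin n) (Fin n) ℚ)) '' mikhailovaGenerators R).Finite :=
    ((Set.finite_range _).union (hR.image _)).image _
  let L := hfin.toFinset.toList
  let r : ℕ → FreeGroup γ := fun k => (FreeGroup.of y)⁻¹ * FreeGroup.of x ^ g k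
  let X : ℕ → List (Matrix (Fin n) (Fin n) ℚ) := fun k => L ++ [(φ (1, r k)).val]
  have hX : Computable X := by
    obtain ⟨A, B, hAB⟩ := exists_cornerMatrix_parabolic_eq hn
      (freeRep idx (FreeGroup.of y)⁻¹).val (6 * idx x)
    have h := computable_affine_matrix A B hg
    refine (Computable.list_append.comp (Computable.const L)
      (Computable.list_cons.comp h (Computable.const []))).of_eq fun k => ?_
    rw [← hAB]
    have hr : (freeRep idx (r k)).val
        = (freeRep idx (FreeGroup.of y)⁻¹).val * parabolic (6 * idx x) (g k) := by
      rw [map_mul, map_pow, Units.val_mul, ← parabolicUnit_pow]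
      simp [freeRep]
    rw [← hr]
    have h1 : φ (1, r k) = cornerHom hn (1, freeRep idx (r k)) := by
      simp [φ, freeCornerHom]
    simp only [X, h1]
    rfl
  have hset : ∀ k, {g : GL (Fin n) ℚ | (g : Matrix (Fin n) (Fin n) ℚ) ∈ X k}
      = φ '' mikhailovaGenerators (insert (r k) R) := by
    intro k
    ext M
    rw [mikhailovaGenerators_insert, Set.image_insert_eq]
    simp only [X, L, Set.mem_ofPred_eq, List.mem_append, List.mem_singleton, Finset.mem_toList,
      Set.Finite.mem_toFinset, Set.mem_insert_iff, Set.mem_image]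
    rw [or_comm]
    simp only [Units.val_inj]
  rw [ComputablePred.computable_iff]
  refine ⟨fun k => f (X k), hf.comp hX, ?_⟩
  funext k
  rw [eq_iff_iff, hspec, hset, ← MonoidHom.map_closure,
    ← exists_mem_closure_cornerMatrix_eq_zero_iff hn hidx hz]
  · have hval : ∀ p : FreeGroup γ × FreeGroup γ,
        (φ p : Matrix (Fin n) (Fin n) ℚ) ⟨0, by omega⟩ ⟨0, by omega⟩ = 0 ↔
        cornerMatrix hn (freeRep idx p.1).val (freeRep idx p.2).val ⟨0, by omega⟩ ⟨0, by omega⟩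
          = 0 := fun p => Int.cast_eq_zero (α := ℚ)
    simp only [Subgroup.mem_map, exists_exists_and_eq_and, hval]
    rfl
  · intro M hM
    simp only [X, L, List.mem_append, List.mem_singleton, Finset.mem_toList,
      Set.Finite.mem_toFinset] at hM
    rcases hM with ⟨p, -, rfl⟩ | rfl <;> exact Units.isUnit _

/-- An affine move replaces the vector `m * u + a` by `p * u + q`, for every integral `u`. -/
structure AffineMove (ι : Type*) where
  (m a p q : ι → ℤ)
  m_pos : ∀ i, 0 < m i
  p_pos : ∀ i, 0 < p i

/-- One of the affine moves of the family `μ` sends `z` to `z'`. -/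
def AffineStep {ι κ : Type*} (μ : κ → AffineMove ι) (z z' : ι → ℤ) : Prop :=
  ∃ i u, z = (μ i).m * u + (μ i).a ∧ z' = (μ i).p * u + (μ i).q

section VectorPower

variable {ι G : Type*} [Fintype ι] [Group G] (X : ι → G)

/-- The product of the powers `X j ^ a j`, in an arbitrary order. -/
noncomputable def vecPow (a : ι → ℤ) : G :=
  ((Finset.univ : Finset ι).toList.map fun j => X j ^ a j).prod

theorem map_vecPow {H : Type*} [Group H] (f : G →* H) (a : ι → ℤ) :
    f (vecPow X a) = vecPow (fun j => f (X j)) a := by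
  simp [vecPow, map_list_prod, Function.comp_def]

variable {X}

theorem vecPow_add (h : ∀ i j, Commute (X i) (X j)) (a b : ι → ℤ) :
    vecPow X (a + b) = vecPow X a * vecPow X b := by
  unfold vecPow
  induction (Finset.univ : Finset ι).toList with
  | nil => simp
  | cons j l ih =>
    have hc : Commute (X j ^ b j) (l.map fun j => X j ^ a j).prod := by
      refine Commute.list_prod_right _ _ fun y hy => ?_
      obtain ⟨i, -, rfl⟩ := List.mem_map.1 hy
      exact ((h j i).zpow_left _).zpow_right _
    simp only [List.map_cons, List.prod_cons, Pi.add_apply, zpow_add] at ih ⊢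
    rw [ih, mul_assoc, mul_assoc, ← mul_assoc (X j ^ b j), hc.eq, mul_assoc]

theorem vecPow_zero : vecPow X 0 = 1 := by
  simp [vecPow]

theorem vecPow_single [DecidableEq ι] (j : ι) (c : ℤ) :
    vecPow X (Pi.single j c) = X j ^ c := by
  unfold vecPow
  rw [List.prod_map_eq_pow_single j, Pi.single_eq_same]
  · rw [List.count_eq_one_of_mem (Finset.nodup_toList _) (by simp), pow_one]
  · intro i hi _
    rw [Pi.single_eq_of_ne hi, zpow_zero]

theorem conj_vecPow {r : G} {m p : ι → ℤ} (h : ∀ j, r⁻¹ * X j ^ m j * r = X j ^ p j)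
    (u : ι → ℤ) : r⁻¹ * vecPow X (m * u) * r = vecPow X (p * u) := by
  have hj : ∀ j, MulAut.conj r⁻¹ (X j ^ (m j * u j)) = X j ^ (p j * u j) := by
    intro j
    have := h j
    rw [zpow_mul, zpow_mul, map_zpow, MulAut.conj_apply, inv_inv, this]
  have h2 : r⁻¹ * vecPow X (m * u) * r = MulAut.conj r⁻¹ (vecPow X (m * u)) := by
    rw [MulAut.conj_apply, inv_inv]
  rw [h2, vecPow, map_list_prod, List.map_map]
  simp only [Function.comp_def, Pi.mul_apply, hj]
  rfl

/-- The conjugate of `T` by the power `vecPow X a`. -/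
noncomputable def vecConj (X : ι → G) (T : G) (a : ι → ℤ) : G :=
  vecPow X a * T * (vecPow X a)⁻¹

theorem map_vecConj {H : Type*} [Group H] (f : G →* H) (T : G) (a : ι → ℤ) :
    f (vecConj X T a) = vecConj (fun j => f (X j)) (f T) a := by
  simp [vecConj, map_vecPow]

theorem vecConj_add (h : ∀ i j, Commute (X i) (X j)) (T : G) (a b : ι → ℤ) :
    vecConj X T (a + b) = vecPow X a * vecConj X T b * (vecPow X a)⁻¹ := by
  rw [vecConj, vecConj, vecPow_add h]
  group

theorem commute_vecConj_of_eqvGen {κ : Type*} {μ : κ → AffineMove ι} {K T : G} {r : κ → G}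
    (hX : ∀ i j, Commute (X i) (X j))
    (hrX : ∀ i j, (r i)⁻¹ * X j ^ (μ i).m j * r i = X j ^ (μ i).p j)
    (hrT : ∀ i, (r i)⁻¹ * vecConj X T (μ i).a * r i = vecConj X T (μ i).q)
    (hKT : Commute K T) (hKr : ∀ i, Commute K (r i)) {z : ι → ℤ}
    (hz : Relation.EqvGen (AffineStep μ) z 0) : Commute K (vecConj X T z) := by
  have h : ∀ z z', Relation.EqvGen (AffineStep μ) z z' →
      (Commute K (vecConj X T z) ↔ Commute K (vecConj X T z')) := by
    intro z z' h
    induction h with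
    | rel z z' h =>
      obtain ⟨i, u, rfl, rfl⟩ := h
      have h1 : vecConj X T ((μ i).p * u + (μ i).q)
          = (r i)⁻¹ * vecConj X T ((μ i).m * u + (μ i).a) * r i := by
        rw [vecConj_add hX, vecConj_add hX, ← conj_vecPow (hrX i), ← hrT i]
        group
      have h2 : vecConj X T ((μ i).m * u + (μ i).a)
          = r i * vecConj X T ((μ i).p * u + (μ i).q) * (r i)⁻¹ := by
        rw [h1]; group
      constructor
      · intro h
        rw [h1]
        exact ((hKr i).inv_right.mul_right h).mul_right (hKr i)
      · intro h
        rw [h2]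
        exact ((hKr i).mul_right h).mul_right (hKr i).inv_right
    | refl z => exact Iff.rfl
    | symm z z' _ ih => exact ih.symm
    | trans z z' z'' _ _ ih ih' => exact ih.trans ih'
  rw [h z 0 hz]
  simpa [vecConj, vecPow_zero] using hKT

end VectorPower

section Presentation

open scoped commutatorElement

/-- Generators of the group attached to a system of affine moves. -/
inductive AffineGen (ι κ : Type*)
  | z | k | y | t
  | x (j : ι)
  | r (i : κ)

variable {ι κ : Type*}

instance [Finite ι] [Finite κ] : Finite (AffineGen ι κ) := by
  refine Finite.of_surjective
    (fun s : Fin 4 ⊕ ι ⊕ κ => match s with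
      | .inl 0 => .z
      | .inl 1 => .k
      | .inl 2 => .y
      | .inl 3 => .t
      | .inr (.inl j) => .x j
      | .inr (.inr i) => .r i) ?_
  rintro (_ | _ | _ | _ | j | i)
  exacts [⟨.inl 0, rfl⟩, ⟨.inl 1, rfl⟩, ⟨.inl 2, rfl⟩, ⟨.inl 3, rfl⟩, ⟨.inr (.inl j), rfl⟩,
    ⟨.inr (.inr i), rfl⟩]

variable [Fintype ι]

open AffineGen in
open FreeGroup (of) in
/-- The relations saying that conjugation by `r i` realizes the move `μ i` on the conjugates of
`t`, that `k` commutes with `t` and the `r i`, and that `z` is a commutator of `k` with a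
conjugate of `t`. -/
def affineRelators (μ : κ → AffineMove ι) (v : ι → ℤ) : Set (FreeGroup (AffineGen ι κ)) :=
  Set.range (fun s : ι × ι => ⁅of (x s.1 : AffineGen ι κ), of (x s.2)⁆) ∪
  Set.range (fun s : κ × ι => (of (r s.1))⁻¹ * of (x s.2) ^ (μ s.1).m s.2 * of (r s.1) *
    (of (x s.2) ^ (μ s.1).p s.2)⁻¹) ∪
  Set.range (fun i : κ => (of (r i))⁻¹ * vecConj (fun j => of (x j)) (of t) (μ i).a * of (r i) *
    (vecConj (fun j => of (x j)) (of t) (μ i).q)⁻¹) ∪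
  Set.range (fun i : κ => ⁅of (k : AffineGen ι κ), of (r i)⁆) ∪
  {⁅of (k : AffineGen ι κ), of t⁆,
    (of z)⁻¹ * ⁅of (k : AffineGen ι κ), of y * vecConj (fun j => of (x j)) (of t) v * (of y)⁻¹⁆}

theorem finite_affineRelators [Finite κ] (μ : κ → AffineMove ι) (v : ι → ℤ) :
    (affineRelators μ v).Finite :=
  ((((Set.finite_range _).union (Set.finite_range _)).union (Set.finite_range _)).union
    (Set.finite_range _)).union (Set.toFinite _)

open AffineGen in
open FreeGroup (of) in
theorem forall_affineRelators_map_eq_one_iff {G : Type*} [Group G] (μ : κ → AffineMove ι)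
    (v : ι → ℤ) (f : FreeGroup (AffineGen ι κ) →* G) :
    (∀ w ∈ affineRelators μ v, f w = 1) ↔
      (∀ i j, Commute (f (of (x i))) (f (of (x j)))) ∧
      (∀ i j, (f (of (r i)))⁻¹ * f (of (x j)) ^ (μ i).m j * f (of (r i))
        = f (of (x j)) ^ (μ i).p j) ∧
      (∀ i, (f (of (r i)))⁻¹ * vecConj (fun j => f (of (x j))) (f (of t)) (μ i).a * f (of (r i))
        = vecConj (fun j => f (of (x j))) (f (of t)) (μ i).q) ∧
      (∀ i, Commute (f (of k)) (f (of (r i)))) ∧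
      Commute (f (of k)) (f (of t)) ∧
      f (of z) = ⁅f (of k), f (of y) * vecConj (fun j => f (of (x j))) (f (of t)) v *
        (f (of y))⁻¹⁆ := by
  simp only [affineRelators, Set.mem_union, or_imp, forall_and, Set.forall_mem_range,
    Set.mem_insert_iff, Set.mem_singleton_iff, forall_eq, Prod.forall, and_assoc, map_mul,
    map_commutatorElement, map_inv, map_zpow, commutatorElement_eq_one_iff_commute, map_vecConj,
    mul_inv_eq_one, inv_mul_eq_one]

open AffineGen in
open FreeGroup (of) in
theorem mem_normalClosure_of_eqvGen [DecidableEq ι] {μ : κ → AffineMove ι} {v : ι → ℤ} {j : ι}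
    {c : ℕ} (h : Relation.EqvGen (AffineStep μ) (Pi.single j (c : ℤ) + v) 0) :
    of z ∈ Subgroup.normalClosure (insert ((of y)⁻¹ * of (x j) ^ c) (affineRelators μ v)) := by
  set R := insert ((of y)⁻¹ * of (x j) ^ c) (affineRelators μ v)
  let f := QuotientGroup.mk' (Subgroup.normalClosure R)
  have hR : ∀ w ∈ R, f w = 1 := fun w hw =>
    (QuotientGroup.eq_one_iff w).2 (Subgroup.subset_normalClosure hw)
  obtain ⟨hX, hrX, hrT, hKr, hKT, hz⟩ := (forall_affineRelators_map_eq_one_iff μ v f).1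
    fun w hw => hR w (Set.mem_insert_of_mem _ hw)
  have hy : f (of y) = f (of (x j)) ^ c := by
    simpa [inv_mul_eq_one] using hR _ (Set.mem_insert _ _)
  have hK := commute_vecConj_of_eqvGen hX hrX hrT hKT hKr h
  rw [vecConj_add hX, vecPow_single, zpow_natCast, ← hy] at hK
  rw [← QuotientGroup.eq_one_iff]
  change f (of z) = 1
  rw [hz, commutatorElement_eq_one_iff_commute]
  exact hK

end Presentation

section PermutationModel

open scoped commutatorElement

variable {ι : Type*}

/-- Euclidean division of integral vectors, after a translation. -/
def vecDivEquiv {m : ι → ℤ} (hm : ∀ i, 0 < m i) (a : ι → ℤ) :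
    (ι → ℤ) ≃ (ι → ℤ) × {ρ : ι → ℤ // ∀ i, 0 ≤ ρ i ∧ ρ i < m i} where
  toFun z := (fun i => (z i - a i) / m i, ⟨fun i => (z i - a i) % m i,
    fun i => ⟨Int.emod_nonneg _ (hm i).ne', Int.emod_lt_of_pos _ (hm i)⟩⟩)
  invFun s := m * s.1 + a + s.2.1
  left_inv z := by
    ext i
    have := Int.mul_ediv_add_emod (z i - a i) (m i)
    simp only [Pi.add_apply, Pi.mul_apply]
    linarith
  right_inv := by
    rintro ⟨u, ρ, hρ⟩
    have h : ∀ i, (m * u + a + ρ) i - a i = ρ i + m i * u i := fun i => by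
      simp only [Pi.add_apply, Pi.mul_apply]; ring
    simp only [h, Int.add_mul_ediv_left _ _ (hm _).ne', Int.add_mul_emod_self_left,
      Int.ediv_eq_zero_of_lt (hρ _).1 (hρ _).2, Int.emod_eq_of_lt (hρ _).1 (hρ _).2, zero_add]

/-- The lines of the permutation model: two special ones, and inert ones with arbitrary marking. -/
abbrev ModelLine (ι : Type*) := Bool ⊕ Set (ι → ℤ) × ℕ × Set (ι → ℤ)

/-- The points of the permutation model. -/
abbrev ModelPoint (ι : Type*) := (ι → ℤ) × ModelLine ι

/-- The type of a line: its name for a special line, its marking for an inert one. -/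
def ModelLine.label : ModelLine ι → Bool ⊕ Set (ι → ℤ) := Sum.map id Prod.fst

/-- The set of marked points on a line of given label. -/
def labelMarking (S : Set (ι → ℤ)) : Bool ⊕ Set (ι → ℤ) → Set (ι → ℤ) :=
  Sum.elim (fun b => cond b S Set.univ) id

/-- The set of marked points of the permutation model. -/
def marked (S : Set (ι → ℤ)) : Set (ModelPoint ι) := {ω | ω.1 ∈ labelMarking S ω.2.label}

/-- The translations of the permutation model. -/
def translation : Multiplicative (ι → ℤ) →* Equiv.Perm (ModelPoint ι) where
  toFun a := (Equiv.addLeft a.toAdd).prodCongr (Equiv.refl _)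
  map_one' := by ext ω <;> simp
  map_mul' a b := by ext ω <;> simp [add_assoc]

theorem translation_apply (a : ι → ℤ) (ω : ModelPoint ι) :
    translation (Multiplicative.ofAdd a) ω = (a + ω.1, ω.2) := rfl

open Classical in
/-- The label of a residue class on a line after division by `m`. -/
noncomputable def residueLabel (m a : ι → ℤ) (S : Set (ι → ℤ)) {P : (ι → ℤ) → Prop}
    (s : {ρ : ι → ℤ // P ρ} × ModelLine ι) : Bool ⊕ Set (ι → ℤ) :=
  if s.1.1 = 0 ∧ s.2.isLeft then s.2.label
  else Sum.inr {u | m * u + a + s.1.1 ∈ labelMarking S s.2.label}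

theorem nonempty_fiber_equiv (m a : ι → ℤ) (hm : ∀ i, 0 < m i) (S : Set (ι → ℤ))
    (c : Bool ⊕ Set (ι → ℤ)) :
    Nonempty ({s : {ρ : ι → ℤ // ∀ i, 0 ≤ ρ i ∧ ρ i < m i} × ModelLine ι //
      residueLabel m a S s = c} ≃ {l : ModelLine ι // l.label = c}) := by
  have hzero : ∀ i, (0 : ℤ) ≤ (0 : ι → ℤ) i ∧ (0 : ι → ℤ) i < m i := fun i => ⟨le_rfl, hm i⟩
  rcases c with b | P
  · have h1 : ∀ s : {ρ : ι → ℤ // ∀ i, 0 ≤ ρ i ∧ ρ i < m i} × ModelLine ι,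
        residueLabel m a S s = Sum.inl b ↔ s = (⟨0, hzero⟩, Sum.inl b) := by
      rintro ⟨⟨ρ, hρ⟩, b' | y⟩
      · by_cases h : ρ = 0 <;> simp [residueLabel, ModelLine.label, h]
      · simp [residueLabel]
    have h2 : ∀ l : ModelLine ι, l.label = Sum.inl b ↔ l = Sum.inl b := by
      rintro (b' | y) <;> simp [ModelLine.label]
    simp only [h1, h2]
    exact ⟨Equiv.ofUnique _ _⟩
  · have e2 : ((ℕ × Set (ι → ℤ)) ≃ {l : ModelLine ι // l.label = Sum.inr P}) := {
      toFun := fun i => ⟨Sum.inr (P, i), rfl⟩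
      invFun := fun l => Sum.elim (fun _ => (0, ∅)) Prod.snd l.1
      left_inv := fun i => rfl
      right_inv := by
        rintro ⟨b | ⟨P, i⟩, h⟩
        · simp [ModelLine.label] at h
        · simp only [ModelLine.label, Sum.map_inr, Sum.inr.injEq] at h
          subst h
          rfl }
    have hinj : Function.Injective fun u : ι → ℤ => m * u + a := by
      intro u v h
      ext i
      have := congrFun h i
      simp only [Pi.add_apply, Pi.mul_apply, add_left_inj] at this
      exact mul_left_cancel₀ (hm i).ne' this
    have f : ℕ × Set (ι → ℤ) ↪ {s : {ρ : ι → ℤ // ∀ i, 0 ≤ ρ i ∧ ρ i < m i} × ModelLine ι //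
        residueLabel m a S s = Sum.inr P} := by
      refine ⟨fun i => ⟨(⟨0, hzero⟩, Sum.inr ((fun u : ι → ℤ => m * u + a) '' P, i)), ?_⟩, ?_⟩
      · simp only [residueLabel, Sum.isLeft_inr, Bool.false_eq_true, and_false, if_false,
          ModelLine.label, Sum.map_inr, labelMarking, Sum.elim_inr, id, add_zero]
        congr 1
        ext u
        exact hinj.mem_set_image
      · intro i j h
        simpa using h
    have hcard : Cardinal.mk ({ρ : ι → ℤ // ∀ i, 0 ≤ ρ i ∧ ρ i < m i} × ModelLine ι)
        ≤ Cardinal.mk (ℕ × Set (ι → ℤ)) := by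
      have hinf : Cardinal.aleph0 ≤ Cardinal.mk (ℕ × Set (ι → ℤ)) := Cardinal.aleph0_le_mk _
      have hset : Cardinal.mk (Set (ι → ℤ)) ≤ Cardinal.mk (ℕ × Set (ι → ℤ)) :=
        Cardinal.mk_le_of_injective (f := fun P => (0, P)) fun _ _ h => (Prod.mk.inj h).2
      have hvec : Cardinal.mk {ρ : ι → ℤ // ∀ i, 0 ≤ ρ i ∧ ρ i < m i}
          ≤ Cardinal.mk (ℕ × Set (ι → ℤ)) :=
        (Cardinal.mk_le_of_injective (f := fun ρ => ({ρ.1} : Set (ι → ℤ)))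
          fun _ _ h => Subtype.ext (Set.singleton_injective h)).trans hset
      unfold ModelLine
      rw [← Cardinal.mul_def, Cardinal.mk_sum, ← Cardinal.mul_def (Set (ι → ℤ)),
        Cardinal.lift_uzero, Cardinal.mk_bool, Cardinal.lift_ofNat]
      exact Cardinal.mul_le_of_le hinf hvec (Cardinal.add_le_of_le hinf
        (Cardinal.ofNat_lt_aleph0.le.trans hinf) (Cardinal.mul_le_of_le hinf hset le_rfl))
    obtain ⟨g⟩ := hcard
    obtain ⟨e⟩ := Function.Embedding.antisymm f ((Function.Embedding.subtype _).trans g)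
    exact ⟨e.symm.trans e2⟩

theorem exists_rescaling (m a : ι → ℤ) (hm : ∀ i, 0 < m i) (S : Set (ι → ℤ)) :
    ∃ E : Equiv.Perm (ModelPoint ι),
      (∀ u, E * translation (Multiplicative.ofAdd (m * u))
        = translation (Multiplicative.ofAdd u) * E) ∧
      (∀ b, E (a, Sum.inl b) = (0, Sum.inl b)) ∧
      ∀ ω, E ω ∈ marked {u | m * u + a ∈ S} ↔ ω ∈ marked S := by
  have hne := nonempty_fiber_equiv m a hm S
  let β := Equiv.ofFiberEquiv fun c => (hne c).some
  have hβ : ∀ s, (β s).label = residueLabel m a S s :=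
    Equiv.ofFiberEquiv_map fun c => (hne c).some
  let E : Equiv.Perm (ModelPoint ι) :=
    (((vecDivEquiv hm a).prodCongr (Equiv.refl _)).trans (Equiv.prodAssoc _ _ _)).trans
      ((Equiv.refl _).prodCongr β)
  have hE : ∀ z l, E (z, l) = ((vecDivEquiv hm a z).1, β ((vecDivEquiv hm a z).2, l)) :=
    fun z l => rfl
  refine ⟨E, fun u => ?_, fun b => ?_, ?_⟩
  · ext1 ⟨z, l⟩
    have h : vecDivEquiv hm a (m * u + z)
        = (u + (vecDivEquiv hm a z).1, (vecDivEquiv hm a z).2) := by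
      obtain ⟨s, rfl⟩ := (vecDivEquiv hm a).symm.surjective z
      rw [← Equiv.eq_symm_apply, Equiv.apply_symm_apply]
      simp only [vecDivEquiv, Equiv.coe_fn_symm_mk]
      ring
    simp only [Equiv.Perm.mul_apply, translation_apply, hE, h]
  · have h : vecDivEquiv hm a a = (0, ⟨0, fun i => ⟨le_rfl, hm i⟩⟩) := by
      rw [← Equiv.eq_symm_apply]
      simp [vecDivEquiv]
    rw [hE, h]
    refine Prod.ext rfl ?_
    have h2 := hβ (⟨0, fun i => ⟨le_rfl, hm i⟩⟩, Sum.inl b)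
    simp only [residueLabel, Sum.isLeft_inl, and_self, if_true] at h2
    generalize β (⟨0, fun i => ⟨le_rfl, hm i⟩⟩, Sum.inl b) = l at h2
    rcases l with b' | y <;> simp_all [ModelLine.label]
  · rintro ⟨z, l⟩
    obtain ⟨⟨u, ρ⟩, rfl⟩ := (vecDivEquiv hm a).symm.surjective z
    simp only [hE, Equiv.apply_symm_apply, marked, Set.mem_ofPred_eq, hβ]
    simp only [residueLabel]
    split_ifs with h
    · obtain ⟨h0, h1⟩ := h
      rcases l with (_ | _) | y
      · simp [ModelLine.label, labelMarking]
      · simp [ModelLine.label, labelMarking, vecDivEquiv, h0]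
      · simp at h1
    · rfl

/-- Permutations of the model act on two copies of it. -/
def doubling (Ω : Type*) : Equiv.Perm Ω →* Equiv.Perm (Ω × Bool) where
  toFun g := g.prodCongr (Equiv.refl _)
  map_one' := rfl
  map_mul' _ _ := rfl

open Classical in
/-- The involution of two copies of `Ω` exchanging the copies of the points of `D`. -/
noncomputable def flipOn {Ω : Type*} (D : Set Ω) : Equiv.Perm (Ω × Bool) :=
  Function.Involutive.toPerm (fun ω => (ω.1, xor ω.2 (decide (ω.1 ∈ D)))) fun ω => by simp

theorem flipOn_apply {Ω : Type*} (D : Set Ω) [DecidablePred (· ∈ D)] (ω : Ω × Bool) :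
    flipOn D ω = (ω.1, xor ω.2 (decide (ω.1 ∈ D))) := by
  change (ω.1, xor ω.2 (@decide _ (Classical.propDecidable _))) = _
  congr

theorem doubling_apply {Ω : Type*} (g : Equiv.Perm Ω) (ω : Ω × Bool) :
    doubling Ω g ω = (g ω.1, ω.2) := rfl

theorem commute_flipOn_doubling_iff {Ω : Type*} {D : Set Ω} {g : Equiv.Perm Ω} :
    Commute (flipOn D) (doubling Ω g) ↔ ∀ ω, g ω ∈ D ↔ ω ∈ D := by
  classical
  rw [Commute, SemiconjBy, Equiv.ext_iff]
  simp [flipOn_apply, doubling_apply]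

variable {κ : Type*} [Fintype ι]

theorem vecPow_translation [DecidableEq ι] (a : ι → ℤ) :
    vecPow (fun j => translation (Multiplicative.ofAdd (Pi.single j 1))) a
      = translation (Multiplicative.ofAdd a) := by
  rw [← map_vecPow (fun j : ι => Multiplicative.ofAdd (Pi.single j (1 : ℤ))) translation]
  congr 1
  rw [vecPow, Finset.prod_map_toList]
  simp only [← ofAdd_zsmul, ← ofAdd_sum, ← Pi.single_smul, smul_eq_mul, mul_one,
    Finset.univ_sum_single]

open AffineGen in
open FreeGroup (of) in
theorem eqvGen_of_mem_normalClosure [DecidableEq ι] {μ : κ → AffineMove ι} {v : ι → ℤ} {j : ι}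
    {c : ℕ}
    (h : of z ∈ Subgroup.normalClosure (insert ((of y)⁻¹ * of (x j) ^ c) (affineRelators μ v))) :
    Relation.EqvGen (AffineStep μ) (Pi.single j (c : ℤ) + v) 0 := by
  classical
  let S : Set (ι → ℤ) := {z | Relation.EqvGen (AffineStep μ) z 0}
  have hS : ∀ i, {u | (μ i).m * u + (μ i).a ∈ S} = {u | (μ i).p * u + (μ i).q ∈ S} := by
    intro i
    ext u
    have hu : AffineStep μ ((μ i).m * u + (μ i).a) ((μ i).p * u + (μ i).q) := ⟨i, u, rfl, rfl⟩
    exact ⟨((Relation.EqvGen.rel _ _ hu).symm).trans _ _ _,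
      (Relation.EqvGen.rel _ _ hu).trans _ _ _⟩
  choose E hE1 hE2 hE3 using fun i => exists_rescaling (μ i).m (μ i).a (μ i).m_pos S
  choose F hF1 hF2 hF3 using fun i => exists_rescaling (μ i).p (μ i).q (μ i).p_pos S
  let X : ι → Equiv.Perm (ModelPoint ι) :=
    fun j => translation (Multiplicative.ofAdd (Pi.single j 1))
  let T : Equiv.Perm (ModelPoint ι) := Equiv.swap (0, Sum.inl false) (0, Sum.inl true)
  have hT : ∀ a, vecConj X T a = Equiv.swap (a, Sum.inl false) (a, Sum.inl true) := by
    intro a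
    rw [vecConj, vecPow_translation, ← Equiv.swap_apply_apply]
    simp [translation_apply]
  have hTS : ∀ a, (∀ ω, vecConj X T a ω ∈ marked S ↔ ω ∈ marked S) ↔ a ∈ S := by
    intro a
    have h0 : (a, Sum.inl false) ∈ marked S := trivial
    have h1 : (a, Sum.inl true) ∈ marked S ↔ a ∈ S := Iff.rfl
    rw [hT]
    constructor
    · intro h
      rw [← h1, ← h, Equiv.swap_apply_right]
      exact h0
    · intro h ω
      rcases eq_or_ne ω (a, Sum.inl false) with rfl | hf
      · simp [Equiv.swap_apply_left, h0, h1, h]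
      rcases eq_or_ne ω (a, Sum.inl true) with rfl | ht
      · simp [Equiv.swap_apply_right, h0, h1, h]
      rw [Equiv.swap_apply_of_ne_of_ne hf ht]
  let d := doubling (ModelPoint ι)
  let K := flipOn (marked S)
  let f : FreeGroup (AffineGen ι κ) →* Equiv.Perm (ModelPoint ι × Bool) :=
    FreeGroup.lift fun
      | .z => ⁅K, d (X j ^ c) * d (vecConj X T v) * (d (X j ^ c))⁻¹⁆
      | .k => K
      | .y => d (X j ^ c)
      | .t => d T
      | .x j => d (X j)
      | .r i => d ((E i)⁻¹ * F i)
  have hXm : ∀ j n, X j ^ n = translation (Multiplicative.ofAdd (Pi.single j n)) := by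
    intro j n
    rw [← map_zpow, ← ofAdd_zsmul, ← Pi.single_smul, smul_eq_mul, mul_one]
  have hXX : ∀ i j, Commute (X i) (X j) := fun i j => (Commute.all _ _).map translation
  have hR : ∀ w ∈ affineRelators μ v, f w = 1 := by
    rw [forall_affineRelators_map_eq_one_iff]
    simp only [f, FreeGroup.lift_apply_of, ← map_vecConj d, ← map_zpow, ← map_inv, ← map_mul]
    refine ⟨fun i j => (hXX i j).map d, fun i j => ?_, fun i => ?_, fun i => ?_, ?_, trivial⟩
    · congr 1
      have h1 := hE1 i (Pi.single j 1)
      have h2 := hF1 i (Pi.single j 1)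
      have hs : ∀ w : ι → ℤ, w * Pi.single j 1 = Pi.single j (w j) := fun w => by
        rw [← Pi.single_mul_right, mul_one]
      rw [hs, ← hXm, ← eq_inv_mul_iff_mul_eq] at h1 h2
      rw [h1, h2]
      group
    · congr 1
      have h : ∀ b, ((E i)⁻¹ * F i) ((μ i).q, Sum.inl b) = ((μ i).a, Sum.inl b) := fun b => by
        rw [Equiv.Perm.mul_apply, hF2, Equiv.Perm.inv_eq_iff_eq, hE2]
      rw [hT, hT, ← h, ← h, Equiv.swap_apply_apply]
      group
    · rw [commute_flipOn_doubling_iff]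
      intro ω
      rw [← hF3 i ω, ← hS, ← hE3 i, Equiv.Perm.mul_apply, Equiv.Perm.inv_def,
        Equiv.apply_symm_apply]
    · rw [commute_flipOn_doubling_iff]
      have := (hTS 0).2 (Relation.EqvGen.refl 0)
      simpa [vecConj, vecPow_zero] using this
  have hle : Subgroup.normalClosure (insert ((of y)⁻¹ * of (x j) ^ c) (affineRelators μ v))
      ≤ f.ker := by
    refine Subgroup.normalClosure_le_normal (Set.insert_subset ?_ hR)
    simp [f, MonoidHom.mem_ker]
  have hz : f (of z) = 1 := hle h
  simp only [f, FreeGroup.lift_apply_of, commutatorElement_eq_one_iff_commute, ← map_mul,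
    ← map_inv] at hz
  rw [commute_flipOn_doubling_iff, ← zpow_natCast, ← vecPow_single, ← vecConj_add hXX, hTS] at hz
  exact hz

end PermutationModel

/-- A stack machine: in state `q` the top symbol `h` of the stack `key q`, if there is one, is
replaced by the word `(act q h).2`, and the state becomes `(act q h).1`. The states are numbered,
and those of number `0` are final. -/
structure StackMachine (Q K Γ : Type*) where
  key : Q → K
  act : Q → Option Γ → Q × List Γ
  num : Q → ℕ

namespace StackMachine

variable {Q K Γ : Type*} (A : StackMachine Q K Γ)

section Semantics

variable [DecidableEq K]

/-- The configuration following a given one. -/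
def next (c : Q × (K → List Γ)) : Q × (K → List Γ) :=
  ((A.act c.1 (c.2 (A.key c.1)).head?).1,
    Function.update c.2 (A.key c.1)
      ((A.act c.1 (c.2 (A.key c.1)).head?).2 ++ (c.2 (A.key c.1)).tail))

/-- A step of computation from a non-final configuration. -/
def Step (c c' : Q × (K → List Γ)) : Prop := A.num c.1 ≠ 0 ∧ c' = A.next c

/-- The machine reaches a final state. -/
def Halts (c : Q × (K → List Γ)) : Prop :=
  ∃ c', Relation.ReflTransGen A.Step c c' ∧ A.num c'.1 = 0

end Semantics

/-- The set `F` is a set of states stable under the transitions, on which the numbering is bounded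
by `B` and injective outside of final states. -/
structure IsStable (F : Set Q) (B : ℕ) : Prop where
  act_mem : ∀ q ∈ F, A.num q ≠ 0 → ∀ h, (A.act q h).1 ∈ F
  num_lt : ∀ q ∈ F, A.num q < B
  num_inj : ∀ q ∈ F, ∀ q' ∈ F, A.num q ≠ 0 → A.num q = A.num q' → q = q'

/-- A numbering of the letters by the nonzero digits in base `b`. -/
structure IsDigit (dig : Option Γ → ℕ) (b : ℕ) : Prop where
  none_eq : dig none = 0
  lt : ∀ h, dig h < b
  inj : Function.Injective dig

variable (dig : Option Γ → ℕ) (b B : ℕ)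

/-- The number whose digits are given by the letters of a word. -/
def encodeWord (l : List Γ) : ℕ := Nat.ofDigits b (l.map fun a => dig (some a))

/-- The vector encoding a configuration. -/
def encodeConfig (c : Q × (K → List Γ)) : Option K → ℤ
  | none => A.num c.1
  | some k => encodeWord dig b (c.2 k)

variable {dig b B} (hb : 0 < b) (hB : 0 < B) [DecidableEq K]

variable (dig) in
/-- The affine move simulating a transition. -/
def transitionMove (q : Q) (h : Option Γ) : AffineMove (Option K) where
  m j := j.elim B fun k => if k = A.key q then b else 1
  a j := j.elim (A.num q) fun k => if k = A.key q then dig h else 0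
  p j := j.elim B fun k => if k = A.key q then b ^ (A.act q h).2.length else 1
  q j := j.elim (A.num (A.act q h).1) fun k =>
    if k = A.key q then encodeWord dig b (A.act q h).2 else 0
  m_pos j := by
    rcases j with _ | k
    · simpa using hB
    · by_cases hk : k = A.key q <;> simp [hk, hb]
  p_pos j := by
    rcases j with _ | k
    · simpa using hB
    · by_cases hk : k = A.key q <;> simp [hk, hb]

/-- The affine move incrementing the coordinate `k` of the encoding of a final configuration. -/
def cleanupMove (k : K) : AffineMove (Option K) where
  m j := j.elim B fun _ => 1
  a := 0
  p j := j.elim B fun _ => 1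
  q := Pi.single (some k) 1
  m_pos j := by cases j <;> simp [hB]
  p_pos j := by cases j <;> simp [hB]

variable (dig) in
/-- The affine moves simulating a stack machine on a stable set of states. -/
def moves (F : Set Q) : {q // q ∈ F ∧ A.num q ≠ 0} × Option Γ ⊕ K → AffineMove (Option K) :=
  Sum.elim (fun s => A.transitionMove dig hb hB s.1 s.2) (cleanupMove hB)

variable {F : Set Q}

theorem encodeWord_eq (hdig : IsDigit dig b)
    (l : List Γ) :
    encodeWord dig b l = b * encodeWord dig b l.tail + dig l.head? := by
  cases l with
  | nil => simp [encodeWord, hdig.none_eq]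
  | cons a l => simp [encodeWord, Nat.ofDigits_cons, add_comm]

theorem encodeWord_append (l l' : List Γ) :
    encodeWord dig b (l ++ l') = b ^ l.length * encodeWord dig b l' + encodeWord dig b l := by
  simp [encodeWord, Nat.ofDigits_append, add_comm]

/-- The vector of quotients in the simulation of a transition. -/
def quotientVector (dig : Option Γ → ℕ) (b : ℕ) (c : Q × (K → List Γ)) : Option K → ℤ :=
  fun j => j.elim 0 fun k =>
    if k = A.key c.1 then encodeWord dig b (c.2 k).tail else encodeWord dig b (c.2 k)

theorem encodeConfig_eq (hdig : IsDigit dig b)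
    (c : Q × (K → List Γ)) :
    A.encodeConfig dig b c = (A.transitionMove dig hb hB c.1 (c.2 (A.key c.1)).head?).m *
      A.quotientVector dig b c + (A.transitionMove dig hb hB c.1 (c.2 (A.key c.1)).head?).a := by
  ext j
  rcases j with _ | k
  · simp [encodeConfig, transitionMove, quotientVector]
  · by_cases hk : k = A.key c.1
    · subst hk
      simp only [encodeConfig, transitionMove, quotientVector, Pi.add_apply, Pi.mul_apply,
        Option.elim_some, if_true]
      exact_mod_cast encodeWord_eq hdig _
    · simp [encodeConfig, transitionMove, quotientVector, hk]

theorem encodeConfig_next (c : Q × (K → List Γ)) :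
    A.encodeConfig dig b (A.next c) = (A.transitionMove dig hb hB c.1 (c.2 (A.key c.1)).head?).p *
      A.quotientVector dig b c + (A.transitionMove dig hb hB c.1 (c.2 (A.key c.1)).head?).q := by
  ext j
  rcases j with _ | k
  · simp [encodeConfig, transitionMove, quotientVector, next]
  · by_cases hk : k = A.key c.1
    · subst hk
      simp only [encodeConfig, transitionMove, quotientVector, Pi.add_apply, Pi.mul_apply,
        Option.elim_some, if_true, next, Function.update_self, encodeWord_append]
      push_cast
      rfl
    · simp [encodeConfig, transitionMove, quotientVector, next, hk]

/-- A step of the affine system simulating a transition. -/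
def TransitionStep (F : Set Q) (z z' : Option K → ℤ) : Prop :=
  ∃ q ∈ F, A.num q ≠ 0 ∧ ∃ h u, z = (A.transitionMove dig hb hB q h).m * u +
    (A.transitionMove dig hb hB q h).a ∧
    z' = (A.transitionMove dig hb hB q h).p * u + (A.transitionMove dig hb hB q h).q

theorem eq_of_mul_add_eq_mul_add {B a a' : ℕ} {u u' : ℤ} (ha : a < B) (ha' : a' < B)
    (h : (B : ℤ) * u + a = B * u' + a') : a = a' ∧ u = u' := by
  have h1 : a = a' := by
    have := congrArg (· % (B : ℤ)) h
    simp only [Int.mul_add_emod_self_left] at this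
    rw [Int.emod_eq_of_lt (by positivity) (by exact_mod_cast ha),
      Int.emod_eq_of_lt (by positivity) (by exact_mod_cast ha')] at this
    exact_mod_cast this
  subst h1
  refine ⟨rfl, ?_⟩
  have hB : (B : ℤ) ≠ 0 := by exact_mod_cast (Nat.zero_lt_of_lt ha).ne'
  exact mul_left_cancel₀ hB (add_right_cancel h)

theorem TransitionStep.unique (hF : A.IsStable F B) (hdig : IsDigit dig b)
    {z z' z'' : Option K → ℤ}
    (h' : A.TransitionStep (dig := dig) hb hB F z z')
    (h'' : A.TransitionStep (dig := dig) hb hB F z z'') : z' = z'' := by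
  obtain ⟨q, hq, hn, h, u, rfl, rfl⟩ := h'
  obtain ⟨q', hq', -, h', u', e, rfl⟩ := h''
  have e0 := eq_of_mul_add_eq_mul_add (hF.num_lt q hq) (hF.num_lt q' hq') (congrFun e none)
  obtain rfl := hF.num_inj q hq q' hq' hn e0.1
  have e1 := congrFun e (some (A.key q))
  simp only [transitionMove, Pi.add_apply, Pi.mul_apply, Option.elim_some, if_true] at e1
  have e2 := eq_of_mul_add_eq_mul_add (hdig.lt _) (hdig.lt _) e1
  obtain rfl := hdig.inj e2.1
  congr 2
  have := add_right_cancel e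
  ext j
  exact mul_left_cancel₀ ((A.transitionMove dig hb hB q h).m_pos j).ne' (congrFun this j)

theorem TransitionStep.not_dvd (hF : A.IsStable F B)
    {z z' : Option K → ℤ}
    (h' : A.TransitionStep (dig := dig) hb hB F z z') : ¬ (B : ℤ) ∣ z none := by
  obtain ⟨q, hq, hn, h, u, rfl, rfl⟩ := h'
  change ¬ (B : ℤ) ∣ B * u none + A.num q
  rw [Int.dvd_add_right (dvd_mul_right _ _), Int.natCast_dvd_natCast]
  exact Nat.not_dvd_of_pos_of_lt (Nat.pos_of_ne_zero hn) (hF.num_lt q hq)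

theorem transitionStep_encodeConfig (hdig : IsDigit dig b)
    {c : Q × (K → List Γ)} (hc : c.1 ∈ F) (h0 : A.num c.1 ≠ 0) :
    A.TransitionStep (dig := dig) hb hB F (A.encodeConfig dig b c)
      (A.encodeConfig dig b (A.next c)) :=
  ⟨c.1, hc, h0, _, _, A.encodeConfig_eq hb hB hdig c, A.encodeConfig_next hb hB c⟩

theorem halts_of_transitionStep (hF : A.IsStable F B) (hdig : IsDigit dig b)
    {c : Q × (K → List Γ)} (hc : c.1 ∈ F) {z : Option K → ℤ}
    (h : Relation.ReflTransGen (A.TransitionStep (dig := dig) hb hB F)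
      (A.encodeConfig dig b c) z) (hz : (B : ℤ) ∣ z none) : A.Halts c := by
  generalize hx : A.encodeConfig dig b c = x at h
  induction h using Relation.ReflTransGen.head_induction_on generalizing c with
  | refl =>
    subst hx
    refine ⟨c, .refl, ?_⟩
    have h1 : (B : ℤ) ∣ A.num c.1 := hz
    exact Nat.eq_zero_of_dvd_of_lt (Int.natCast_dvd_natCast.1 h1) (hF.num_lt _ hc)
  | head h1 _ ih =>
    subst hx
    have h0 : A.num c.1 ≠ 0 := by
      intro h0
      refine h1.not_dvd A hb hB hF ?_
      change (B : ℤ) ∣ A.num c.1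
      simp [h0]
    have h2 := A.transitionStep_encodeConfig hb hB hdig hc h0
    obtain ⟨c', hc', h'⟩ := ih (hF.act_mem _ hc h0 _) (h2.unique A hb hB hF hdig h1)
    exact ⟨c', hc'.head ⟨h0, rfl⟩, h'⟩

theorem eqvGen_moves_iff_halts (hF : A.IsStable F B) (hdig : IsDigit dig b)
    [Fintype K] {c : Q × (K → List Γ)} (hc : c.1 ∈ F) :
    Relation.EqvGen (AffineStep (A.moves dig hb hB F)) (A.encodeConfig dig b c) 0
      ↔ A.Halts c := by
  constructor
  · intro h
    let W : Set (Option K → ℤ) := {z | ∃ z', Relation.ReflTransGen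
      (A.TransitionStep (dig := dig) hb hB F) z z' ∧ (B : ℤ) ∣ z' none}
    have hW : ∀ z z', Relation.EqvGen (AffineStep (A.moves dig hb hB F)) z z' →
        (z ∈ W ↔ z' ∈ W) := by
      intro z z' h
      induction h with
      | rel z z' h =>
        obtain ⟨⟨⟨q, hq, hn⟩, h⟩ | k, u, hz, hz'⟩ := h
        · have hs : A.TransitionStep (dig := dig) hb hB F z z' := ⟨q, hq, hn, h, u, hz, hz'⟩
          constructor
          · rintro ⟨w, hw, hd⟩
            rcases hw.cases_head with rfl | ⟨w', h1, h2⟩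
            · exact absurd hd (hs.not_dvd A hb hB hF)
            · obtain rfl := hs.unique A hb hB hF hdig h1
              exact ⟨w, h2, hd⟩
          · rintro ⟨w, hw, hd⟩
            exact ⟨w, hw.head hs, hd⟩
        · have h1 : (B : ℤ) ∣ z none := by
            rw [hz]
            exact ⟨u none, by simp [moves, cleanupMove]⟩
          have h2 : (B : ℤ) ∣ z' none := by
            rw [hz']
            exact ⟨u none, by simp [moves, cleanupMove]⟩
          exact iff_of_true ⟨z, .refl, h1⟩ ⟨z', .refl, h2⟩
      | refl z => exact Iff.rfl
      | symm z z' _ ih => exact ih.symm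
      | trans z z' z'' _ _ ih ih' => exact ih.trans ih'
    obtain ⟨z, hz, hd⟩ := (hW _ _ h).2 ⟨0, .refl, dvd_zero _⟩
    exact A.halts_of_transitionStep hb hB hF hdig hc hz hd
  · rintro ⟨c', hcc', h0⟩
    induction hcc' using Relation.ReflTransGen.head_induction_on with
    | refl =>
      have hstep : ∀ z : Option K → ℤ, z none = 0 → ∀ k (n : ℕ), Relation.EqvGen
          (AffineStep (A.moves dig hb hB F)) (z + Pi.single (some k) (n : ℤ)) z := by
        intro z hz k n
        induction n with
        | zero => simpa using Relation.EqvGen.refl z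
        | succ n ih =>
          refine .trans _ _ _ (.symm _ _ (.rel _ _ ⟨Sum.inr k, z + Pi.single (some k) (n : ℤ),
            ?_, ?_⟩)) ih
          · ext (_ | k')
            · simp [moves, cleanupMove, hz]
            · simp [moves, cleanupMove]
          · ext (_ | k')
            · simp [moves, cleanupMove, hz]
            · simp [moves, cleanupMove, add_assoc, Pi.single_add, Pi.add_apply, Pi.mul_apply]
      have hsum : ∀ s : Finset K, Relation.EqvGen (AffineStep (A.moves dig hb hB F))
          (∑ k ∈ s, Pi.single (some k) (encodeWord dig b (c'.2 k) : ℤ)) 0 := by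
        intro s
        induction s using Finset.induction_on with
        | empty => simpa using Relation.EqvGen.refl _
        | insert k s hk ih =>
          rw [Finset.sum_insert hk, add_comm]
          exact (hstep _ (by simp) k _).trans _ _ _ ih
      convert hsum Finset.univ using 1
      ext (_ | k)
      · simp [encodeConfig, h0]
      · simp [encodeConfig, Finset.sum_apply, Pi.single_apply]
    | head h1 _ ih =>
      obtain ⟨hn, rfl⟩ := h1
      obtain ⟨q, hq, hn', h, u, hz⟩ := A.transitionStep_encodeConfig hb hB hdig hc hn
      exact .trans _ _ _ (.rel _ _ ⟨Sum.inl (⟨q, hq, hn'⟩, h), u, hz⟩)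
        (ih (hF.act_mem _ hc hn _))

end StackMachine

namespace StackMachine

open Turing StateTransition

section Transition

variable {Q K Γ : Type*} [DecidableEq K] (A : StackMachine Q K Γ)

/-- The transition function of a stack machine. -/
def step (c : Q × (K → List Γ)) : Option (Q × (K → List Γ)) :=
  if A.num c.1 = 0 then none else some (A.next c)

theorem halts_iff_eval_dom (c : Q × (K → List Γ)) : A.Halts c ↔ (eval A.step c).Dom := by
  have hrel : (fun a b => b ∈ A.step a) = A.Step := by
    ext a b
    by_cases h : A.num a.1 = 0 <;> simp [step, Step, h, eq_comm]
  rw [Part.dom_iff_mem]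
  simp only [mem_eval, Reaches, hrel, Halts]
  exact exists_congr fun c' => and_congr_right fun _ => by simp [step]

end Transition

variable {K Γ Λ σ : Type*} (M : Λ → TM2.Stmt (fun _ : K => Γ) Λ σ)

/-- The effect of the first instruction of a statement on the values of the variables and on the
top symbol of a stack. -/
def stmtAct : TM2.Stmt (fun _ : K => Γ) Λ σ → σ → Option Γ →
    (Option (TM2.Stmt (fun _ : K => Γ) Λ σ) × σ) × List Γ
  | .push _ f q, v, h => ((some q, v), f v :: h.toList)
  | .peek _ f q, v, h => ((some q, f v h), h.toList)
  | .pop _ f q, v, h => ((some q, f v h), [])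
  | .load f q, v, h => ((some q, f v), h.toList)
  | .branch f q₁ q₂, v, h => ((some (cond (f v) q₁ q₂), v), h.toList)
  | .goto l, v, h => ((some (M (l v)), v), h.toList)
  | .halt, v, h => ((none, v), h.toList)

/-- The stack used by the first instruction of a statement. -/
def stmtKey (k₀ : K) : TM2.Stmt (fun _ : K => Γ) Λ σ → K
  | .push k _ _ => k
  | .peek k _ _ => k
  | .pop k _ _ => k
  | _ => k₀

open Classical in
/-- The stack machine whose states are the statements of a `TM2` machine, together with the values
of the variables. The list `l` serves to number the states. -/
noncomputable def ofTM2 (k₀ : K) (l : List (Option (TM2.Stmt (fun _ : K => Γ) Λ σ) × σ)) :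
    StackMachine (Option (TM2.Stmt (fun _ : K => Γ) Λ σ) × σ) K Γ where
  key q := q.1.elim k₀ (stmtKey k₀)
  act q h := q.1.elim (q, h.toList) fun s => stmtAct M s q.2 h
  num q := q.1.elim 0 fun _ => l.idxOf q + 1

variable (k₀ : K) (l : List (Option (TM2.Stmt (fun _ : K => Γ) Λ σ) × σ))

theorem ofTM2_num_eq_zero (q : Option (TM2.Stmt (fun _ : K => Γ) Λ σ) × σ) :
    (ofTM2 M k₀ l).num q = 0 ↔ q.1 = none := by
  rcases q with ⟨_ | s, v⟩ <;> simp [ofTM2]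

theorem exists_isStable_ofTM2 [Finite σ] {S : Finset Λ}
    (hS : ∀ a ∈ S, TM2.SupportsStmt S (M a)) :
    ∃ (l : List (Option (TM2.Stmt (fun _ : K => Γ) Λ σ) × σ)) (B : ℕ), 0 < B ∧
      (ofTM2 M k₀ l).IsStable {q | q.1 ∈ TM2.stmts M S} B := by
  classical
  have := Fintype.ofFinite σ
  refine ⟨(TM2.stmts M S ×ˢ Finset.univ).toList, (TM2.stmts M S ×ˢ
    (Finset.univ : Finset σ)).toList.length + 1, Nat.succ_pos _, ⟨?_, ?_, ?_⟩⟩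
  · rintro ⟨_ | s, v⟩ hq hn h
    · exact absurd ((ofTM2_num_eq_zero M k₀ _ _).2 rfl) hn
    · have hs : some s ∈ TM2.stmts M S := hq
      have hsub : ∀ s' ∈ TM2.stmts₁ s, some s' ∈ TM2.stmts M S :=
        fun s' h' => TM2.stmts_trans h' hs
      cases s with
      | goto f =>
        simp only [TM2.stmts, Finset.mem_insertNone, Finset.mem_biUnion, Option.mem_def,
          Option.some.injEq, forall_eq'] at hs
        obtain ⟨a, ha, hs⟩ := hs
        have := TM2.stmts₁_supportsStmt_mono hs (hS a ha) v
        simp only [Set.mem_ofPred_eq, ofTM2, Option.elim_some, stmtAct, TM2.stmts,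
          Finset.mem_insertNone, Finset.mem_biUnion, Option.mem_def, Option.some.injEq, forall_eq']
        exact ⟨_, this, TM2.stmts₁_self⟩
      | halt => simp [ofTM2, stmtAct, TM2.stmts]
      | branch f q₁ q₂ =>
        refine hsub _ ?_
        cases f v <;> simp [TM2.stmts₁, TM2.stmts₁_self]
      | load f q => exact hsub _ (by simp [TM2.stmts₁, TM2.stmts₁_self])
      | push k f q => exact hsub _ (by simp [TM2.stmts₁, TM2.stmts₁_self])
      | peek k f q => exact hsub _ (by simp [TM2.stmts₁, TM2.stmts₁_self])
      | pop k f q => exact hsub _ (by simp [TM2.stmts₁, TM2.stmts₁_self])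
  · rintro ⟨_ | s, v⟩ hq
    · simp [ofTM2]
    · simpa only [ofTM2, Option.elim_some, add_lt_add_iff_right] using
        List.idxOf_lt_length_of_mem (by simpa using hq)
  · rintro ⟨_ | s, v⟩ hq ⟨_ | s', v'⟩ hq' hn h
    · simp [ofTM2] at hn
    · simp [ofTM2] at hn
    · simp [ofTM2] at h
    · simp only [ofTM2, Option.elim_some, add_left_inj] at h
      exact (List.idxOf_inj (by simpa using hq)).1 h

/-- The configuration of the stack machine simulating a configuration of a `TM2` machine. -/
def ofCfg (c : TM2.Cfg (fun _ : K => Γ) Λ σ) :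
    (Option (TM2.Stmt (fun _ : K => Γ) Λ σ) × σ) × (K → List Γ) :=
  ((c.l.map M, c.var), c.stk)

theorem head?_toList_append_tail {α : Type*} (l : List α) : l.head?.toList ++ l.tail = l := by
  cases l <;> rfl

variable [DecidableEq K]

theorem reaches₁_stepAux (s : TM2.Stmt (fun _ : K => Γ) Λ σ) (v : σ) (T : K → List Γ) :
    Reaches₁ (ofTM2 M k₀ l).step ((some s, v), T) (ofCfg M (TM2.stepAux s v T)) := by
  have hnext : ∀ (s : TM2.Stmt (fun _ : K => Γ) Λ σ) (v : σ) (T : K → List Γ),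
      Reaches₁ (ofTM2 M k₀ l).step ((some s, v), T)
        ((stmtAct M s v (T (stmtKey k₀ s)).head?).1, Function.update T (stmtKey k₀ s)
          ((stmtAct M s v (T (stmtKey k₀ s)).head?).2 ++ (T (stmtKey k₀ s)).tail)) := by
    intro s v T
    refine .single ?_
    rw [step, if_neg (by simp [ofTM2_num_eq_zero])]
    rfl
  induction s generalizing v T with
  | push k f q ih =>
    refine (hnext _ _ _).trans ?_
    simpa [stmtAct, stmtKey, head?_toList_append_tail, Reaches₁] using ih v _
  | peek k f q ih =>
    refine (hnext _ _ _).trans ?_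
    simpa [stmtAct, stmtKey, head?_toList_append_tail, Reaches₁] using ih _ _
  | pop k f q ih =>
    refine (hnext _ _ _).trans ?_
    simpa [stmtAct, stmtKey, head?_toList_append_tail, Reaches₁] using ih _ _
  | load f q ih =>
    refine (hnext _ _ _).trans ?_
    simpa [stmtAct, stmtKey, head?_toList_append_tail, Reaches₁] using ih _ _
  | branch f q₁ q₂ ih₁ ih₂ =>
    refine (hnext _ _ _).trans ?_
    cases hf : f v
    · simpa [stmtAct, stmtKey, head?_toList_append_tail, hf, Reaches₁] using ih₂ v T
    · simpa [stmtAct, stmtKey, head?_toList_append_tail, hf, Reaches₁] using ih₁ v T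
  | goto f =>
    simpa [stmtAct, stmtKey, head?_toList_append_tail, ofCfg] using hnext (.goto f) v T
  | halt =>
    simpa [stmtAct, stmtKey, head?_toList_append_tail, ofCfg] using hnext .halt v T

theorem halts_ofCfg_iff (c : TM2.Cfg (fun _ : K => Γ) Λ σ) :
    (ofTM2 M k₀ l).Halts (ofCfg M c) ↔ (eval (TM2.step M) c).Dom := by
  rw [halts_iff_eval_dom]
  refine tr_eval_dom (tr := fun c c' => ofCfg M c = c') ?_ rfl
  rintro ⟨_ | a, v, T⟩ _ rfl
  · simp [TM2.step, step, ofTM2_num_eq_zero, ofCfg]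
  · exact ⟨_, rfl, reaches₁_stepAux M k₀ l _ _ _⟩

end StackMachine

namespace Turing.PartrecToTM2

instance : Finite K' :=
  Finite.of_injective (fun k : K' => (decide (k = .main), decide (k = .rev), decide (k = .aux)))
    (by intro a b h; cases a <;> cases b <;> simp_all)

theorem trNum_bit (b : Bool) (m : Num) (h : b = true ∨ m ≠ 0) :
    trNum (cond b m.bit1 m.bit0) = cond b Γ'.bit1 Γ'.bit0 :: trNum m := by
  cases b <;> cases m <;> first | rfl | exact absurd rfl (h.resolve_left Bool.false_ne_true)

theorem trNat_eq_cons {n : ℕ} (hn : n ≠ 0) :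
    trNat n = (if n % 2 = 1 then Γ'.bit1 else Γ'.bit0) :: trNat (n / 2) := by
  have h2 := Nat.mod_add_div n 2
  rcases Nat.mod_two_eq_zero_or_one n with h | h
  · have h0 : ((n / 2 : ℕ) : Num) ≠ 0 := by
      rw [← Nat.cast_zero, Ne, Nat.cast_inj]; omega
    have := trNum_bit false _ (Or.inr h0)
    rw [cond_false, ← Num.bit0_of_bit0, ← Nat.cast_add] at this
    rw [if_neg (by omega), ← cond_false Γ'.bit1 Γ'.bit0]
    simpa only [trNat, show n / 2 + n / 2 = n by omega] using this
  · have := trNum_bit true ((n / 2 : ℕ) : Num) (Or.inl rfl)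
    rw [cond_true, ← Num.bit1_of_bit1, ← Nat.cast_add, ← Nat.cast_succ] at this
    rw [if_pos h, ← cond_true Γ'.bit1 Γ'.bit0]
    simpa only [trNat, show (n / 2 + n / 2).succ = n by omega] using this

theorem computable_encodeWord_trList (dig : Option Γ' → ℕ) (b : ℕ) :
    Computable fun n => StackMachine.encodeWord dig b (trList [n]) := by
  have hg : Primrec₂ fun (_ : Unit) (l : List ℕ) =>
      if l.length = 0 then some (StackMachine.encodeWord dig b (trList [0])) else
        (l[l.length / 2]?).map fun w =>
          dig (some (if l.length % 2 = 1 then Γ'.bit1 else Γ'.bit0)) + b * w := by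
    have hl : Primrec fun p : Unit × List ℕ => p.2.length := Primrec.list_length.comp .snd
    refine Primrec.ite (Primrec.eq.comp hl (.const 0)) (.const _) (Primrec.option_map
      (Primrec.list_getElem?.comp .snd (Primrec.nat_div.comp hl (.const 2))) ?_)
    refine Primrec.nat_add.comp ?_ (Primrec.nat_mul.comp (.const b) .snd)
    simp only [apply_ite some, apply_ite dig]
    exact Primrec.ite (Primrec.eq.comp (Primrec.nat_mod.comp (hl.comp .fst) (.const 2)) (.const 1))
      (.const _) (.const _)
  refine ((Primrec.nat_strong_rec (fun _ n => StackMachine.encodeWord dig b (trList [n])) hg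
    fun _ n => ?_).comp (.const ()) .id).to_comp
  rcases eq_or_ne n 0 with rfl | hn
  · simp
  · have : n / 2 < n := by omega
    simp only [List.length_map, List.length_range, hn, if_false, List.getElem?_map,
      List.getElem?_range this, Option.map_some, trList, trNat_eq_cons hn,
      StackMachine.encodeWord, List.cons_append, List.map_cons, Nat.ofDigits_cons]

end Turing.PartrecToTM2

open Turing PartrecToTM2 in
theorem exists_not_computablePred_eval_tr :
    ∃ c : ToPartrec.Code, ¬ ComputablePred fun n =>
      (StateTransition.eval (TM2.step tr) (PartrecToTM2.init c [n])).Dom := by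
  have hf : Partrec fun n => (Nat.Partrec.Code.eval (Denumerable.ofNat _ n) 0) :=
    Nat.Partrec.Code.eval_part.comp (Computable.ofNat _) (.const 0)
  obtain ⟨c, hc⟩ := ToPartrec.Code.exists_code (Nat.Partrec'.part_iff₁.2 hf)
  refine ⟨c, fun h => ComputablePred.halting_problem 0 ?_⟩
  refine (ComputablePred.computable_of_manyOneReducible (p := fun c => _) ⟨Encodable.encode,
    Computable.encode, fun d => ?_⟩ h)
  have := hc ⟨[Encodable.encode d], rfl⟩
  rw [tr_eval]
  erw [this]
  simp [List.Vector.head]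

open Turing PartrecToTM2 in
/-- There is a finite family of affine moves for which it is undecidable whether a point of a given
line is equivalent to the origin. -/
theorem exists_not_computablePred_eqvGen :
    ∃ (ι κ : Type) (_ : Fintype ι) (_ : DecidableEq ι) (_ : Finite κ) (μ : κ → AffineMove ι)
      (j : ι) (v : ι → ℤ) (g : ℕ → ℕ), Computable g ∧ ¬ ComputablePred fun n =>
        Relation.EqvGen (AffineStep μ) (Pi.single j (g n : ℤ) + v) 0 := by
  classical
  obtain ⟨c, hc⟩ := exists_not_computablePred_eval_tr
  have := Fintype.ofFinite K'
  let dig : Option Γ' → ℕ := fun h => h.elim 0 fun a => Fintype.equivFin Γ' a + 1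
  let b := Fintype.card Γ' + 1
  have hdig : StackMachine.IsDigit dig b := by
    refine ⟨rfl, ?_, ?_⟩
    · rintro (_ | a) <;> simp [dig, b]
    · rintro (_ | a) (_ | a') h <;> simp_all [dig, Fin.val_inj]
  obtain ⟨l, B, hB, hF⟩ := StackMachine.exists_isStable_ofTM2 tr K'.main (tr_supports c .halt).2
  have hFfin : Finite {q : Option (TM2.Stmt (fun _ : K' => Γ') Λ' (Option Γ')) × Option Γ' |
      q.1 ∈ TM2.stmts tr (codeSupp c .halt)} :=
    Set.Finite.subset (((TM2.stmts tr (codeSupp c .halt)).finite_toSet).prod Set.finite_univ)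
      fun q hq => ⟨hq, trivial⟩
  have : Finite {q : Option (TM2.Stmt (fun _ : K' => Γ') Λ' (Option Γ')) × Option Γ' //
      q ∈ {q | q.1 ∈ TM2.stmts tr (codeSupp c .halt)} ∧
        (StackMachine.ofTM2 tr K'.main l).num q ≠ 0} :=
    Set.Finite.subset hFfin fun q hq => hq.1
  refine ⟨Option K', _, inferInstance, inferInstance, inferInstance,
    (StackMachine.ofTM2 tr K'.main l).moves dig (Nat.succ_pos _ : 0 < b) hB
      {q | q.1 ∈ TM2.stmts tr (codeSupp c .halt)}, some .main,
    (StackMachine.ofTM2 tr K'.main l).encodeConfig dig b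
      ((some (tr (trNormal c .halt)), none), fun _ => []),
    _, computable_encodeWord_trList dig b, fun h => hc (h.of_eq fun n => ?_)⟩
  refine Iff.trans ?_ (((StackMachine.ofTM2 tr K'.main l).eqvGen_moves_iff_halts
    (Nat.succ_pos _ : 0 < b) hB hF hdig ?_).trans (StackMachine.halts_ofCfg_iff tr K'.main l (PartrecToTM2.init c [n])))
  · apply iff_of_eq
    congr 1
    ext (_ | k)
    · simp [StackMachine.encodeConfig]
      rfl
    · cases k
      · simp [StackMachine.encodeConfig, StackMachine.ofCfg, PartrecToTM2.init,
          StackMachine.encodeWord, b]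
      all_goals simp [StackMachine.encodeConfig, StackMachine.ofCfg, PartrecToTM2.init,
        StackMachine.encodeWord]
  · exact Finset.some_mem_insertNone.2 (Finset.mem_biUnion.2
      ⟨_, codeSupp_self c .halt (trStmts₁_self _), TM2.stmts₁_self⟩)

/-- **Undecidability of the upper-left-corner problem for matrix groups.**
For `n ≥ 6`, there is no computable function that, given a finite list `X` of
invertible `n × n` rational matrices, decides whether the subgroup of
`GL_n(ℚ)` generated by `X` contains a matrix whose `(1,1)`-entry is `0`. -/
theorem upper_left_corner_problem_undecidable (n : ℕ) (hn : 6 ≤ n) :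
    ¬ ∃ f : List (Matrix (Fin n) (Fin n) ℚ) → Bool, Computable f ∧
      ∀ X : List (Matrix (Fin n) (Fin n) ℚ), (∀ M ∈ X, IsUnit M) →
        (f X = true ↔
          ∃ g ∈ Subgroup.closure
              {g : GL (Fin n) ℚ | (g : Matrix (Fin n) (Fin n) ℚ) ∈ X},
            (g : Matrix (Fin n) (Fin n) ℚ) ⟨0, by omega⟩ ⟨0, by omega⟩ = 0) := by
  rintro ⟨f, hf, hspec⟩
  obtain ⟨ι, κ, _, _, _, μ, j, v, g, hg, hμ⟩ := exists_not_computablePred_eqvGen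
  exact hμ ((computablePred_mem_normalClosure (by omega) hf hspec (finite_affineRelators μ v)
    (AffineGen.x j) AffineGen.y AffineGen.z hg).of_eq fun _ =>
      ⟨eqvGen_of_mem_normalClosure, mem_normalClosure_of_eqvGen⟩)
end

section
/- Let n ≥ 9. The upper-right-corner problem for matrix groups over ℚ is undecidable: there is no computable function which, given as input a finite list X of invertible n×n matrices with rational entries, decides whether the subgroup ⟨X⟩ of GL_n(ℚ) generated by X contains a non-identity matrix whose (1,n)-entry equals 0. -/
section MatrixEncoding

open Encodable

theorem Rat.encode_denumerable_eq_countP (q : ℚ) :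
    @encode ℚ Rat.instDenumerable.toEncodable q =
      (List.range (@encode ℚ Rat.instEncodable q)).countP
        (fun m => @decide (m ∈ Set.range (@encode ℚ Rat.instEncodable))
          (Encodable.decidableRangeEncode ℚ m)) :=
  rfl

theorem Nat.primrecRel_coprime : PrimrecRel Nat.Coprime := by
  have h1 : PrimrecRel (fun x m : ℕ => m.unpair.1 % x = 0 → m.unpair.2 % x = 0 → x = 1) := by
    have a : PrimrecPred (fun z : ℕ × ℕ => z.2.unpair.1 % z.1 = 0) :=
      Primrec.eq.comp (Primrec.nat_mod.comp
        (Primrec.fst.comp (Primrec.unpair.comp Primrec.snd)) Primrec.fst) (.const 0)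
    have b : PrimrecPred (fun z : ℕ × ℕ => z.2.unpair.2 % z.1 = 0) :=
      Primrec.eq.comp (Primrec.nat_mod.comp
        (Primrec.snd.comp (Primrec.unpair.comp Primrec.snd)) Primrec.fst) (.const 0)
    have c : PrimrecPred (fun z : ℕ × ℕ => z.1 = 1) :=
      Primrec.eq.comp Primrec.fst (.const 1)
    exact (a.not.or (b.not.or c)).of_eq fun z => by tauto
  have h3 : PrimrecPred (fun p : ℕ × ℕ =>
      ∀ x < p.1 + p.2 + 2, p.1 % x = 0 → p.2 % x = 0 → x = 1) :=
    (h1.forall_lt.comp (Primrec.nat_add.comp (Primrec.nat_add.comp Primrec.fst Primrec.snd)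
      (.const 2)) Primrec₂.natPair).of_eq fun p => by simp
  refine h3.of_eq fun p => ?_
  simp only [← Nat.dvd_iff_mod_eq_zero]
  constructor
  · intro h
    by_cases h0 : p.1 = 0 ∧ p.2 = 0
    · simpa [h0] using h 0 (by omega) (by simp [h0]) (by simp [h0])
    · refine h _ ?_ (Nat.gcd_dvd_left p.1 p.2) (Nat.gcd_dvd_right p.1 p.2)
      by_cases h1 : p.1 = 0
      · have := Nat.gcd_le_right (n := p.2) p.1 (by omega); omega
      · have := Nat.gcd_le_left (m := p.1) p.2 (by omega); omega
  · intro h x _ h1 h2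
    exact Nat.eq_one_of_dvd_coprimes h h1 h2

theorem Int.natAbs_eq_encode_add_one_div_two (z : ℤ) : z.natAbs = (encode z + 1) / 2 := by
  rcases z with n | n
  · change n = (2 * n + 1) / 2; omega
  · change n + 1 = (2 * n + 1 + 1) / 2; omega

theorem Rat.primrecPred_mem_range_encode :
    PrimrecPred (fun m => m ∈ Set.range (@encode ℚ Rat.instEncodable)) := by
  have h : PrimrecPred (fun m : ℕ => m.unpair.2 ≠ 0 ∧
      Nat.Coprime ((m.unpair.1 + 1) / 2) m.unpair.2) := by
    have a : Primrec (fun m : ℕ => m.unpair.1) := Primrec.fst.comp Primrec.unpair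
    have b : Primrec (fun m : ℕ => m.unpair.2) := Primrec.snd.comp Primrec.unpair
    exact (Primrec.eq.comp b (.const 0)).not.and (Nat.primrecRel_coprime.comp
      (Primrec.nat_div.comp (Primrec.nat_add.comp a (.const 1)) (.const 2)) b)
  refine h.of_eq fun m => ?_
  constructor
  · rintro ⟨h1, h2⟩
    refine ⟨⟨Denumerable.ofNat ℤ m.unpair.1, m.unpair.2, h1, ?_⟩, ?_⟩
    · rwa [Int.natAbs_eq_encode_add_one_div_two, Denumerable.encode_ofNat]
    · change Nat.pair (encode (Denumerable.ofNat ℤ m.unpair.1)) m.unpair.2 = m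
      rw [Denumerable.encode_ofNat, Nat.pair_unpair]
  · rintro ⟨q, rfl⟩
    change (Nat.unpair (Nat.pair (encode q.num) q.den)).2 ≠ 0 ∧
      Nat.Coprime (((Nat.unpair (Nat.pair (encode q.num) q.den)).1 + 1) / 2)
        (Nat.unpair (Nat.pair (encode q.num) q.den)).2
    rw [Nat.unpair_pair, ← Int.natAbs_eq_encode_add_one_div_two]
    exact ⟨q.den_nz, q.reduced⟩

theorem Primrec.rat_intCast : Primrec (Int.cast : ℤ → ℚ) := by
  have h : Primrec (fun z : ℤ => (List.range (Nat.pair (encode z) 1)).countP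
      (fun m => @decide (m ∈ Set.range (@encode ℚ Rat.instEncodable))
        (Encodable.decidableRangeEncode ℚ m))) := by
    simp only [List.countP_eq_length_filter]
    have : DecidablePred (fun m => m ∈ Set.range (@encode ℚ Rat.instEncodable)) :=
      Encodable.decidableRangeEncode ℚ
    exact (Primrec.list_length.comp ((Primrec.listFilter Rat.primrecPred_mem_range_encode).comp
      (Primrec.list_range.comp (Primrec₂.natPair.comp Primrec.encode (.const 1))))).of_eq
        fun z => by congr!
  refine Primrec.encode_iff.1 (h.of_eq fun z => ?_)
  rw [Rat.encode_denumerable_eq_countP]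
  rfl

theorem Primrec.int_sub_natCast : Primrec₂ (fun a b : ℕ => (a : ℤ) - (b : ℤ)) := by
  have h : Primrec₂ (fun a b : ℕ => if a < b then 2 * (b - a - 1) + 1 else 2 * (a - b)) :=
    Primrec.ite (Primrec.nat_lt.comp Primrec.fst Primrec.snd)
      (Primrec.succ.comp (Primrec.nat_mul.comp (.const 2) (Primrec.nat_sub.comp
        (Primrec.nat_sub.comp Primrec.snd Primrec.fst) (.const 1))))
      (Primrec.nat_mul.comp (.const 2) (Primrec.nat_sub.comp Primrec.fst Primrec.snd))
  refine Primrec.encode_iff.1 (Primrec.of_eq h fun p => ?_)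
  obtain ⟨a, b⟩ := p
  dsimp only
  split_ifs with hab
  · obtain ⟨c, rfl⟩ := Nat.exists_eq_add_of_lt hab
    have : (a : ℤ) - ((a + c + 1 : ℕ) : ℤ) = Int.negSucc c := by omega
    rw [this]
    change _ = 2 * c + 1
    omega
  · obtain ⟨c, rfl⟩ := Nat.exists_eq_add_of_le (not_lt.1 hab)
    have : ((b + c : ℕ) : ℤ) - (b : ℤ) = Int.ofNat c := by simp
    rw [this]
    change _ = 2 * c
    omega

theorem Primrec.rat_quadratic (a b c : ℤ) :
    Primrec (fun N : ℕ => ((a + b * N + c * N ^ 2 : ℤ) : ℚ)) := by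
  have key (a b c : ℕ) : Primrec (fun N : ℕ => a + b * N + c * N * N) :=
    Primrec.nat_add.comp (Primrec.nat_add.comp (.const a) (Primrec.nat_mul.comp (.const b) .id))
      (Primrec.nat_mul.comp (Primrec.nat_mul.comp (.const c) .id) .id)
  refine Primrec.rat_intCast.comp ((Primrec.int_sub_natCast.comp
    (key a.toNat b.toNat c.toNat) (key (-a).toNat (-b).toNat (-c).toNat)).of_eq fun N => ?_)
  have h (z : ℤ) : z = (z.toNat : ℤ) - ((-z).toNat : ℤ) := by omega
  conv_rhs => rw [h a, h b, h c]
  push_cast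
  ring

theorem Primrec.matrix_quadratic {n : ℕ} (A B C : Matrix (Fin n) (Fin n) ℤ) :
    Primrec (fun N : ℕ => (A + (N : ℤ) • B + ((N : ℤ) ^ 2) • C).map (Int.cast : ℤ → ℚ)) := by
  refine Primrec.fin_curry.2 (Primrec₂.swap (Primrec.fin_curry₁.2 fun i => ?_))
  refine Primrec.fin_curry.2 (Primrec₂.swap (Primrec.fin_curry₁.2 fun j => ?_))
  refine (Primrec.rat_quadratic (A i j) (B i j) (C i j)).of_eq fun N => ?_
  simp only [Matrix.map_apply, Matrix.add_apply, Matrix.smul_apply, smul_eq_mul]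
  push_cast
  ring

end MatrixEncoding

section Machines

open Encodable

theorem Turing.PartrecToTM2.trNat_two_pow (j : ℕ) :
    trNat (2 ^ j) = List.replicate j Γ'.bit0 ++ [Γ'.bit1] := by
  induction j with
  | zero => simp [trNat]; rfl
  | succ j ih =>
    have h : ((2 ^ (j + 1) : ℕ) : Num) = Num.bit0 ((2 ^ j : ℕ) : Num) := by
      rw [pow_succ, mul_comm, ← Num.ofNat'_eq, ← Num.ofNat'_eq]
      exact Num.ofNat'_bit false _
    have h2 : ∀ m : Num, m ≠ 0 → trNum (Num.bit0 m) = Γ'.bit0 :: trNum m := by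
      intro m hm
      cases m with
      | zero => exact absurd rfl hm
      | pos p => rfl
    have h3 : ((2 ^ j : ℕ) : Num) ≠ 0 := by
      intro h0
      have := congrArg (fun m : Num => (m : ℕ)) h0
      simp only [Num.to_of_nat] at this
      exact (pow_ne_zero j two_ne_zero) this
    rw [trNat, h, h2 _ h3, List.replicate_succ, List.cons_append, ← ih, trNat]

theorem exists_nat_not_computablePred_partrec :
    ∃ g : ℕ →. ℕ, Partrec g ∧ ¬ ComputablePred fun j : ℕ => (g (2 ^ j)).Dom := by
  have hpow : Primrec (fun j : ℕ => 2 ^ j) := by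
    refine (Primrec.nat_rec₁ 1 (Primrec₂.comp₂ Primrec.nat_mul
      (Primrec₂.right) (Primrec₂.const 2))).of_eq fun j => ?_
    induction j with
    | zero => rfl
    | succ j ih => rw [pow_succ, ← ih]
  let lg : ℕ →. ℕ := fun n => Nat.rfind fun j => Part.some (decide (2 ^ j = n))
  have hlg : Partrec lg := by
    refine Partrec.rfind ?_
    refine Computable.partrec (Primrec.to_comp ?_)
    exact Primrec.eq.decide.comp (hpow.comp Primrec.snd) Primrec.fst
  let ev : ℕ →. ℕ := fun j => Nat.Partrec.Code.eval (Denumerable.ofNat Nat.Partrec.Code j) 0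
  have hev : Partrec ev := Nat.Partrec.Code.eval_part.comp (Computable.ofNat _) (Computable.const 0)
  refine ⟨fun n => (lg n).bind ev, hlg.bind (hev.comp Computable.snd), fun h => ?_⟩
  refine ComputablePred.halting_problem 0 ?_
  obtain ⟨f, hf, hfe⟩ := ComputablePred.computable_iff.1 h
  refine ComputablePred.computable_iff.2 ⟨_, hf.comp Computable.encode, ?_⟩
  funext c
  rw [← congrFun hfe (encode c)]
  have : lg (2 ^ encode c) = Part.some (encode c) := by
    refine Part.eq_some_iff.2 (Nat.mem_rfind.2 ⟨by simp, fun {m} hm => ?_⟩)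
    have := (Nat.pow_lt_pow_iff_right (a := 2) (by norm_num)).2 hm
    simp [this.ne]
  simp [this, ev]

open Turing in
theorem Turing.TM0.exists_not_computablePred_eval_dom :
    ∃ (Γ Λ : Type) (_ : Inhabited Γ) (_ : Fintype Γ) (_ : Inhabited Λ) (M : TM0.Machine Γ Λ)
      (S : Finset Λ) (u v w : Γ), TM0.Supports M ↑S ∧
      ¬ ComputablePred fun j : ℕ => (TM0.eval M (u :: v :: List.replicate j w)).Dom := by
  obtain ⟨g, hg, hnc⟩ := exists_nat_not_computablePred_partrec
  obtain ⟨c, hc⟩ := ToPartrec.Code.exists_code (Nat.Partrec'.part_iff₁.2 hg)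
  let : Inhabited PartrecToTM2.Λ' := ⟨PartrecToTM2.trNormal c PartrecToTM2.Cont'.halt⟩
  let : Fintype PartrecToTM2.K' := ⟨{.main, .rev, .aux, .stack}, by rintro (_ | _ | _ | _) <;> simp⟩
  obtain ⟨M, hM⟩ : ∃ M : PartrecToTM2.Λ' → TM2.Stmt (fun _ : PartrecToTM2.K' => PartrecToTM2.Γ')
    PartrecToTM2.Λ' (Option PartrecToTM2.Γ'), M = PartrecToTM2.tr := ⟨_, rfl⟩
  have hs : TM2.Supports M (PartrecToTM2.codeSupp c PartrecToTM2.Cont'.halt) :=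
    hM ▸ PartrecToTM2.tr_supports c _
  let up : PartrecToTM2.Γ' → (PartrecToTM2.K' → Option PartrecToTM2.Γ') := fun a =>
    Function.update (fun _ => none) PartrecToTM2.K'.main (some a)
  refine ⟨TM2to1.Γ' PartrecToTM2.K' (fun _ => PartrecToTM2.Γ'), _, inferInstance,
    inferInstanceAs (Fintype (Bool × (PartrecToTM2.K' → Option PartrecToTM2.Γ'))),
    inferInstance, TM1to0.tr (TM2to1.tr M), _, (true, up .cons), (false, up .bit1),
    (false, up .bit0), TM1to0.tr_supports _ (TM2to1.tr_supports _ hs), fun h => hnc ?_⟩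
  refine h.of_eq fun j => ?_
  have hl : TM2to1.trInit PartrecToTM2.K'.main (PartrecToTM2.trList [2 ^ j]) =
      (true, up .cons) :: (false, up .bit1) :: List.replicate j (false, up .bit0) := by
    have : (PartrecToTM2.trList [2 ^ j]).reverse =
        .cons :: .bit1 :: List.replicate j .bit0 := by
      simp [PartrecToTM2.trNat_two_pow]
    rw [TM2to1.trInit, this]
    change (true, up .cons) :: (false, up .bit1) ::
      (List.replicate j .bit0).map (fun a => (false, up a)) = _
    rw [List.map_replicate]
  rw [TM1to0.tr_eval]
  erw [← hl]
  rw [TM2to1.tr_eval_dom]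
  have hi : (TM2.init PartrecToTM2.K'.main (PartrecToTM2.trList [2 ^ j]) : PartrecToTM2.Cfg') =
      PartrecToTM2.init c [2 ^ j] := by
    simp only [TM2.init, PartrecToTM2.init]
    congr 1
    funext k
    cases k <;> rfl
  have := hc (2 ^ j ::ᵥ List.Vector.nil)
  change (StateTransition.eval (TM2.step M) _).Dom ↔ _
  rw [hM]
  erw [hi, PartrecToTM2.tr_eval]
  erw [this]
  rfl

/-- A modular machine with states `Q` and rules indexed by `ι`. The rule `i` rewrites the
configuration `(src i, a i + m * K, b i + m * J)` to `(tgt i, a' i + m' i * K, b' i + n' i * J)`. -/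
structure ModularMachine (Q ι : Type) where
  m : ℕ
  src : ι → Q
  tgt : ι → Q
  a : ι → ℕ
  b : ι → ℕ
  a' : ι → ℕ
  b' : ι → ℕ
  m' : ι → ℕ
  n' : ι → ℕ
  m_pos : 0 < m
  a_lt : ∀ i, a i < m
  b_lt : ∀ i, b i < m
  m'_pos : ∀ i, 0 < m' i
  n'_pos : ∀ i, 0 < n' i

namespace ModularMachine

variable {Q ι : Type}

/-- The machine can reach the configuration `(halt, 0, 0)` from the given one. -/
inductive Halts (P : ModularMachine Q ι) (halt : Q) : Q → ℕ → ℕ → Prop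
  | base : Halts P halt halt 0 0
  | step (i : ι) (K J : ℕ) :
      Halts P halt (P.tgt i) (P.a' i + P.m' i * K) (P.b' i + P.n' i * J) →
      Halts P halt (P.src i) (P.a i + P.m * K) (P.b i + P.m * J)

/-- Invariance of a set of configurations (with integer registers) under all the rules. -/
def Invariant (P : ModularMachine Q ι) (E : Q → ℤ → ℤ → Prop) : Prop :=
  ∀ (i : ι) (K J : ℤ), E (P.src i) (P.a i + P.m * K) (P.b i + P.m * J) ↔
    E (P.tgt i) (P.a' i + P.m' i * K) (P.b' i + P.n' i * J)

theorem Invariant.of_halts {P : ModularMachine Q ι} {E : Q → ℤ → ℤ → Prop} (hE : P.Invariant E)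
    {h q : Q} {α β : ℕ} (hh : P.Halts h q α β) (hq : E q α β) : E h 0 0 := by
  induction hh with
  | base => exact_mod_cast hq
  | step i K J _ ih =>
    apply ih
    push_cast at hq ⊢
    exact (hE i K J).1 hq

end ModularMachine

namespace Turing.TM0

variable {Γ Λ : Type} [Inhabited Γ] [Inhabited Λ]

theorem eval_step_dom {M : Machine Γ Λ} {c c' : Cfg Γ Λ} (h : step M c = some c') :
    (StateTransition.eval (step M) c).Dom ↔ (StateTransition.eval (step M) c').Dom := by
  rw [StateTransition.reaches_eval (Relation.ReflTransGen.single h)]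

theorem eval_dom_of_step_eq_none {M : Machine Γ Λ} {c : Cfg Γ Λ} (h : step M c = none) :
    (StateTransition.eval (step M) c).Dom :=
  Part.dom_iff_mem.2 ⟨c, StateTransition.mem_eval.2 ⟨.refl, h⟩⟩

/-- The half-tape encoded by the base `m` digits of a number. -/
def decode (m : ℕ) (γ : ℕ → Γ) (n : ℕ) : ListBlank Γ :=
  ListBlank.mk ((Nat.digits m n).map γ)

theorem decode_zero (m : ℕ) (γ : ℕ → Γ) : decode m γ 0 = ListBlank.mk [] := by
  simp [decode]

theorem decode_add_mul {m : ℕ} (hm : 1 < m) {γ : ℕ → Γ} (h0 : γ 0 = default) {a : ℕ} (ha : a < m)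
    (K : ℕ) : decode m γ (a + m * K) = (decode m γ K).cons (γ a) := by
  by_cases h : a = 0 ∧ K = 0
  · obtain ⟨rfl, rfl⟩ := h
    rw [mul_zero, add_zero, decode_zero, h0, ListBlank.cons_mk]
    exact Quotient.sound' (Or.inl ⟨1, rfl⟩)
  · rw [decode, Nat.digits_add m hm a K ha (by omega), List.map_cons, ← ListBlank.cons_mk]
    rfl

/-- The data of the rule of the modular machine simulating a Turing machine which is applicable
when the last digits of the registers are `c` and `a`. The data consist of the new state, the
remainders and the moduli. -/
def ruleData (M : Λ → Γ → Option (Λ × Stmt Γ)) {T : Type} (st : Λ → T) (m : ℕ) (γ : ℕ → Γ) (d : Γ → ℕ) :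
    Option Λ → ℕ → ℕ → Option T × ℕ × ℕ × ℕ × ℕ
  | none, _, _ => (none, 0, 0, 1, 1)
  | some s, c, a =>
    match M s (γ a) with
    | none => (none, c, a, m, m)
    | some (q, .write b) => (some (st q), c, d b, m, m)
    | some (q, .move .right) => (some (st q), a + m * c, 0, m * m, 1)
    | some (q, .move .left) => (some (st q), 0, c + m * a, 1, m * m)

omit [Inhabited Γ] [Inhabited Λ] in
theorem ruleData_lt {M : Λ → Γ → Option (Λ × Stmt Γ)} {T : Type} {st : Λ → T} {m : ℕ} {γ : ℕ → Γ}
    {d : Γ → ℕ} (hdm : ∀ b, d b < m) {q : Option Λ} {c a : ℕ} (hc : c < m) (ha : a < m) {t : T}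
    (h : (ruleData M st m γ d q c a).1 = some t) :
    (ruleData M st m γ d q c a).2.1 < (ruleData M st m γ d q c a).2.2.2.1 ∧
    (ruleData M st m γ d q c a).2.2.1 < (ruleData M st m γ d q c a).2.2.2.2 := by
  unfold ruleData at *
  split at h
  · simp at h
  · split at h
    · simp at h
    · exact ⟨hc, hdm _⟩
    · exact ⟨by dsimp only; nlinarith, by simp⟩
    · exact ⟨by simp, by dsimp only; nlinarith⟩

/-- The modular machine simulating a Turing machine. -/
def toModular (M : Machine Γ Λ) {T : Type} (st : Λ → T) (val : T → Λ) (m : ℕ) (hm : 1 < m)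
    (γ : ℕ → Γ) (d : Γ → ℕ) : ModularMachine (Option T) (Option T × Fin m × Fin m) where
  m := m
  src i := i.1
  a i := i.2.1
  b i := i.2.2
  tgt i := (ruleData M st m γ d (i.1.map val) i.2.1 i.2.2).1
  a' i := (ruleData M st m γ d (i.1.map val) i.2.1 i.2.2).2.1
  b' i := (ruleData M st m γ d (i.1.map val) i.2.1 i.2.2).2.2.1
  m' i := (ruleData M st m γ d (i.1.map val) i.2.1 i.2.2).2.2.2.1
  n' i := (ruleData M st m γ d (i.1.map val) i.2.1 i.2.2).2.2.2.2
  m_pos := by omega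
  a_lt i := i.2.1.2
  b_lt i := i.2.2.2
  m'_pos i := by
    unfold ruleData
    split
    · exact Nat.one_pos
    · split <;> simp <;> omega
  n'_pos i := by
    unfold ruleData
    split
    · exact Nat.one_pos
    · split <;> simp <;> omega

section

variable {M : Machine Γ Λ} {T : Type} {st : Λ → T} {val : T → Λ} {m : ℕ} {γ : ℕ → Γ} {d : Γ → ℕ}

/-- The Turing machine configuration encoded by a configuration of the modular machine. -/
def decodeCfg (val : T → Λ) (m : ℕ) (γ : ℕ → Γ) (s : T) (L R : ℕ) : Cfg Γ Λ :=
  ⟨val s, Tape.mk' (decode m γ L) (decode m γ R)⟩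

theorem step_decodeCfg (hst : ∀ q (s : T) a x, M (val s) a = some (q, x) → val (st q) = q)
    (hm : 1 < m) (h0 : γ 0 = default) (hd : ∀ b, γ (d b) = b) (hdm : ∀ b, d b < m)
    (s : T) {c a : ℕ} (hc : c < m) (ha : a < m) (K J : ℕ) :
    step M (decodeCfg val m γ s (c + m * K) (a + m * J)) =
      match ruleData M st m γ d (some (val s)) c a with
      | (none, _) => none
      | (some t, a', b', m', n') => some (decodeCfg val m γ t (a' + m' * K) (b' + n' * J)) := by
  have hh : (Tape.mk' (decode m γ (c + m * K)) (decode m γ (a + m * J))).head = γ a := by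
    rw [Tape.mk'_head, decode_add_mul hm h0 ha, ListBlank.head_cons]
  have e1 : a + m * c + m * m * K = a + m * (c + m * K) := by ring
  have e2 : c + m * a + m * m * J = c + m * (a + m * J) := by ring
  simp only [decodeCfg, step, hh, ruleData]
  rcases hM : M (val s) (γ a) with _ | ⟨q, (_ | _) | b⟩
  · rfl
  all_goals
    simp only [Option.map_some, hst _ _ _ _ hM, Option.some.injEq, Cfg.mk.injEq, true_and]
  · rw [e2, decode_add_mul hm h0 hc, decode_add_mul hm h0 hc, zero_add, one_mul,
      Tape.move_left_mk', ListBlank.tail_cons, ListBlank.head_cons]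
  · rw [e1, zero_add, one_mul, decode_add_mul hm h0 ha, decode_add_mul hm h0 ha,
      Tape.move_right_mk', ListBlank.tail_cons, ListBlank.head_cons]
  · rw [decode_add_mul hm h0 ha, decode_add_mul hm h0 (hdm b), hd, Tape.write_mk',
      ListBlank.tail_cons]

omit [Inhabited Γ] in
theorem toModular_halts_none (hm : 1 < m) (L R : ℕ) :
    (toModular M st val m hm γ d).Halts none none L R := by
  induction h : L + R using Nat.strong_induction_on generalizing L R with
  | _ n ih =>
    subst h
    by_cases h0 : L + R = 0
    · obtain ⟨rfl, rfl⟩ : L = 0 ∧ R = 0 := by omega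
      exact .base
    · have hL := Nat.mod_add_div L m
      have hR := Nat.mod_add_div R m
      have hL' : L / m ≤ L := Nat.div_le_self _ _
      have hR' : R / m ≤ R := Nat.div_le_self _ _
      have hlt : L / m + R / m < L + R := by
        rcases Nat.eq_zero_or_pos L with h | h
        · have := Nat.div_lt_self (n := R) (k := m) (by omega) hm
          omega
        · have := Nat.div_lt_self h hm
          omega
      have key := ModularMachine.Halts.step (P := toModular M st val m hm γ d) (halt := none)
        (none, ⟨L % m, Nat.mod_lt _ (by omega)⟩, ⟨R % m, Nat.mod_lt _ (by omega)⟩) (L / m) (R / m)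
      simp only [toModular, ruleData, Option.map_none, zero_add, one_mul, hL, hR] at key
      exact key (ih _ hlt _ _ rfl)

theorem toModular_halts (hst : ∀ q (s : T) a x, M (val s) a = some (q, x) → val (st q) = q)
    (hm : 1 < m) (h0 : γ 0 = default) (hd : ∀ b, γ (d b) = b) (hdm : ∀ b, d b < m)
    (s : T) (L R : ℕ) (h : (StateTransition.eval (step M) (decodeCfg val m γ s L R)).Dom) :
    (toModular M st val m hm γ d).Halts none (some s) L R := by
  obtain ⟨b, hb⟩ := Part.dom_iff_mem.1 h
  generalize hx : decodeCfg val m γ s L R = x at hb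
  clear h
  revert s L R
  refine StateTransition.evalInduction
    (C := fun x => ∀ s L R, decodeCfg val m γ s L R = x →
      (toModular M st val m hm γ d).Halts none (some s) L R) hb fun x _ ih => ?_
  · intro s L R hx
    subst hx
    have hc := Nat.mod_lt L (by omega : m > 0)
    have ha := Nat.mod_lt R (by omega : m > 0)
    have key := ModularMachine.Halts.step (P := toModular M st val m hm γ d) (halt := none)
      (some s, ⟨L % m, hc⟩, ⟨R % m, ha⟩) (L / m) (R / m)
    have hs := step_decodeCfg hst hm h0 hd hdm s hc ha (L / m) (R / m)
    simp only [toModular, Nat.mod_add_div, Option.map_some] at key hs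
    apply key
    rcases hr : ruleData M st m γ d (some (val s)) (L % m) (R % m) with ⟨_ | t, a', b', m', n'⟩
    · exact toModular_halts_none hm _ _
    · rw [hr] at hs
      exact ih _ hs _ _ _ rfl

/-- The configurations from which the Turing machine does not halt. -/
def NonHalting (M : Machine Γ Λ) (val : T → Λ) (m : ℕ) (γ : ℕ → Γ) :
    Option T → ℤ → ℤ → Prop
  | none, _, _ => False
  | some s, L, R => 0 ≤ L ∧ 0 ≤ R ∧
    ¬ (StateTransition.eval (step M) (decodeCfg val m γ s L.toNat R.toNat)).Dom

theorem nonneg_add_mul_iff {c m : ℕ} (h : c < m) (K : ℤ) : 0 ≤ (c : ℤ) + m * K ↔ 0 ≤ K := by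
  constructor
  · intro h'
    by_contra! hK
    have : (m : ℤ) * K ≤ m * (-1) := mul_le_mul_of_nonneg_left (by omega) (by positivity)
    omega
  · intro hK
    positivity

theorem nonHalting_invariant
    (hst : ∀ q (s : T) a x, M (val s) a = some (q, x) → val (st q) = q)
    (hm : 1 < m) (h0 : γ 0 = default) (hd : ∀ b, γ (d b) = b) (hdm : ∀ b, d b < m) :
    (toModular M st val m hm γ d).Invariant (NonHalting M val m γ) := by
  rintro ⟨_ | s, ⟨c, hc⟩, ⟨a, ha⟩⟩ K J
  · simp [toModular, NonHalting, ruleData]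
  have hs := step_decodeCfg hst hm h0 hd hdm s hc ha
  have hlt {t : T} := ruleData_lt (M := M) (t := t) (st := st) (γ := γ) (q := some (val s)) hdm hc ha
  simp only [toModular, Option.map_some]
  rcases hr : ruleData M st m γ d (some (val s)) c a with ⟨_ | t, a', b', m', n'⟩
  · simp only [NonHalting, iff_false, not_and, not_not]
    intro hK hJ
    rw [nonneg_add_mul_iff hc] at hK
    rw [nonneg_add_mul_iff ha] at hJ
    lift K to ℕ using hK
    lift J to ℕ using hJ
    norm_cast
    refine eval_dom_of_step_eq_none ?_
    have := hs K J
    rwa [hr] at this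
  · simp only [hr, Option.some.injEq] at hlt
    obtain ⟨h1, h2⟩ := hlt rfl
    simp only [NonHalting]
    rw [nonneg_add_mul_iff hc, nonneg_add_mul_iff ha, nonneg_add_mul_iff h1,
      nonneg_add_mul_iff h2]
    refine and_congr_right fun hK => and_congr_right fun hJ => not_congr ?_
    lift K to ℕ using hK
    lift J to ℕ using hJ
    norm_cast
    have := hs K J
    rw [hr] at this
    exact eval_step_dom this

end

end Turing.TM0

open Turing in
theorem ModularMachine.exists_undecidable :
    ∃ (Q ι : Type) (_ : Finite Q) (_ : Finite ι) (P : ModularMachine Q ι) (start halt : Q)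
      (N : ℕ → ℕ) (E : Q → ℤ → ℤ → Prop), Primrec N ∧ P.Invariant E ∧ (∀ x y, ¬ E halt x y) ∧
      (∀ j, ¬ P.Halts halt start 0 (N j) → E start 0 (N j)) ∧
      ¬ ComputablePred fun j : ℕ => P.Halts halt start 0 (N j) := by
  obtain ⟨Γ, Λ, _, _, _, M, S, u, v, w, hS, hnc⟩ := TM0.exists_not_computablePred_eval_dom
  classical
  obtain ⟨m, γ, d, hm, h0, hd, hdm⟩ : ∃ (m : ℕ) (γ : ℕ → Γ) (d : Γ → ℕ), 1 < m ∧
      γ 0 = default ∧ (∀ b, γ (d b) = b) ∧ ∀ b, d b < m := by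
    let e := Fintype.equivFin Γ
    refine ⟨Fintype.card Γ + 2,
      fun i => if h : 0 < i ∧ i - 1 < Fintype.card Γ then e.symm ⟨i - 1, h.2⟩ else default,
      fun b => e b + 1, by omega, by simp, fun b => by simp, fun b => (Nat.succ_lt_succ (e b).2).trans (by omega)⟩
  let st : Λ → S := fun q => if h : q ∈ S then ⟨q, h⟩ else ⟨default, hS.1⟩
  have hst : ∀ q (s : S) a x, M s a = some (q, x) → (st q : Λ) = q := by
    intro q s a x h
    have : q ∈ S := hS.2 h s.2
    simp [st, this]
  let val : S → Λ := Subtype.val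
  let P := TM0.toModular M st val m hm γ d
  let tail : ℕ → ℕ := fun j => Nat.rec 0 (fun _ t => d w + m * t) j
  let N : ℕ → ℕ := fun j => d u + m * (d v + m * tail j)
  have htail : Primrec tail :=
    Primrec.nat_rec₁ 0 ((Primrec.nat_add.comp (.const _)
      (Primrec.nat_mul.comp (.const _) Primrec.snd)))
  have hN : Primrec N := Primrec.nat_add.comp (.const _) (Primrec.nat_mul.comp (.const _)
    (Primrec.nat_add.comp (.const _) (Primrec.nat_mul.comp (.const _) htail)))
  have hdt : ∀ j, TM0.decode m γ (tail j) = ListBlank.mk (List.replicate j w) := by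
    intro j
    induction j with
    | zero => exact TM0.decode_zero m γ
    | succ j ih =>
      change TM0.decode m γ (d w + m * tail j) = _
      rw [TM0.decode_add_mul hm h0 (hdm w), ih, hd]
      rfl
  have hinit (j : ℕ) : TM0.decodeCfg val m γ (⟨default, hS.1⟩ : S) 0 (N j) =
      TM0.init (u :: v :: List.replicate j w) := by
    simp only [TM0.decodeCfg, TM0.init, N]
    rw [TM0.decode_add_mul hm h0 (hdm u), TM0.decode_add_mul hm h0 (hdm v), hdt, hd, hd,
      TM0.decode_zero]
    rfl
  have hE := TM0.nonHalting_invariant (val := val) hst hm h0 hd hdm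
  have key : ∀ j, P.Halts none (some ⟨default, hS.1⟩) 0 (N j) ↔
      (TM0.eval M (u :: v :: List.replicate j w)).Dom := by
    intro j
    change _ ↔ (StateTransition.eval (TM0.step M) _).Dom
    rw [← hinit]
    refine ⟨fun h => ?_, TM0.toModular_halts hst hm h0 hd hdm _ _ _⟩
    by_contra hd
    exact hE.of_halts h ⟨by simp, by simp, by simpa using hd⟩
  refine ⟨Option S, _, inferInstance, inferInstance, P, some ⟨default, hS.1⟩, none, N,
    TM0.NonHalting M val m γ, hN, hE, fun _ _ h => h, fun j h => ?_, fun h => hnc ?_⟩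
  · rw [key] at h
    change ¬ (StateTransition.eval (TM0.step M) _).Dom at h
    rw [← hinit] at h
    exact ⟨le_rfl, by simp, by simpa using h⟩
  · exact h.of_eq key

end Machines

section Relations

variable {Q ι : Type}

/-- The conjugate of a state generator which represents a configuration. -/
def ModularMachine.conf {G : Type*} [Group G] (x y : G) (t : Q → G) (q : Q) (α β : ℕ) : G :=
  x ^ α * y ^ β * t q * (x ^ α * y ^ β)⁻¹

/-- The relations of a group which simulates a modular machine: `r i` conjugates configurations
according to the rule `i`, and `k` commutes with the rules and with the halting configuration. -/
structure ModularMachine.Relations (P : ModularMachine Q ι) (halt : Q) {G : Type*} [Group G]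
    (x y k : G) (t : Q → G) (r : ι → G) : Prop where
  xy : x * y = y * x
  rx : ∀ i, r i * x ^ P.m = x ^ P.m' i * r i
  ry : ∀ i, r i * y ^ P.m = y ^ P.n' i * r i
  rconf : ∀ i, r i * conf x y t (P.src i) (P.a i) (P.b i) =
    conf x y t (P.tgt i) (P.a' i) (P.b' i) * r i
  rk : ∀ i, r i * k = k * r i
  kt : k * t halt = t halt * k

theorem ModularMachine.conf_add {G : Type*} [Group G] {x y : G} (h : Commute x y) (t : Q → G)
    (q : Q) (α β α' β' : ℕ) : conf x y t q (α + α') (β + β') =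
      x ^ α' * y ^ β' * conf x y t q α β * (x ^ α' * y ^ β')⁻¹ := by
  have h1 : x ^ (α + α') * y ^ (β + β') = x ^ α' * y ^ β' * (x ^ α * y ^ β) := by
    rw [add_comm α, add_comm β, pow_add, pow_add, mul_assoc, mul_assoc]
    congr 1
    rw [← mul_assoc, ← mul_assoc]
    congr 1
    exact h.pow_pow _ _
  rw [conf, h1, conf]
  group

theorem ModularMachine.Relations.commute_conf {P : ModularMachine Q ι} {halt : Q} {G : Type*}
    [Group G] {x y k : G} {t : Q → G} {r : ι → G} (hR : P.Relations halt x y k t r)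
    {q : Q} {α β : ℕ} (h : P.Halts halt q α β) : Commute k (conf x y t q α β) := by
  induction h with
  | base =>
    simp only [conf, pow_zero, mul_one, one_mul, inv_one]
    exact hR.kt
  | step i K J _ ih =>
    rw [conf_add hR.xy] at ih ⊢
    have h1 : SemiconjBy (r i) (x ^ P.m) (x ^ P.m' i) := hR.rx i
    have h2 : SemiconjBy (r i) (y ^ P.m) (y ^ P.n' i) := hR.ry i
    have h3 := (h1.pow_right K).mul_right (h2.pow_right J)
    have h4 : SemiconjBy (r i) _ _ := (h3.mul_right (hR.rconf i)).mul_right h3.inv_right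
    simp only [pow_mul] at ih ⊢
    have h5 : Commute (r i) k := hR.rk i
    have h6 := eq_inv_mul_iff_mul_eq.2 h4.eq
    rw [h6, ← mul_assoc]
    exact (h5.symm.inv_right.mul_right ih).mul_right h5.symm

end Relations

section Model

open Cardinal

/-- Two maps all of whose fibres have the same cardinality differ by a bijection, and the bijection
can be chosen to match two given points. -/
theorem exists_equiv_of_mk_fiber_eq {A B C : Type} {κ : Cardinal} (f : A → B) (g : C → B)
    (hf : ∀ b, #{a // f a = b} = κ) (hg : ∀ b, #{c // g c = b} = κ) (a : A) (c : C) (h : f a = g c) :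
    ∃ θ : A ≃ C, (∀ x, g (θ x) = f x) ∧ θ a = c := by
  classical
  have e (b : B) : {a // f a = b} ≃ {c // g c = b} := Classical.choice <|
    Cardinal.eq.1 ((hf b).trans (hg b).symm)
  refine ⟨(Equiv.ofFiberEquiv e).trans (Equiv.swap (Equiv.ofFiberEquiv e a) c), fun x => ?_, ?_⟩
  · have hx (x) : g (Equiv.ofFiberEquiv e x) = f x := Equiv.ofFiberEquiv_map e x
    simp only [Equiv.trans_apply, Equiv.swap_apply_def]
    split_ifs with h1 h2
    · rw [← h, ← hx a, ← h1, hx]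
    · rw [hx, h, ← h2, hx]
    · exact hx x
  · simp

/-- Division with remainder in both coordinates, with respect to a base point. -/
def intProdDivMod (p q : ℕ) [NeZero p] [NeZero q] (o : ℤ × ℤ) :
    (ℤ × ℤ) × (Fin p × Fin q) ≃ ℤ × ℤ :=
  (Equiv.prodProdProdComm _ _ _ _).trans <|
    (Equiv.prodCongr (Int.divModEquiv p).symm (Int.divModEquiv q).symm).trans (Equiv.addRight o)

theorem intProdDivMod_apply (p q : ℕ) [NeZero p] [NeZero q] (o w : ℤ × ℤ) (j : Fin p × Fin q) :
    intProdDivMod p q o (w, j) = (w.1 * p + (j.1 : ℕ), w.2 * q + (j.2 : ℕ)) + o := by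
  rfl

theorem mk_fiber_pattern {K : Type} [Finite K] [Nonempty K] (e : (ℤ × ℤ) × K ≃ ℤ × ℤ)
    (B : Set (ℤ × ℤ)) :
    #{s : K × (Set (ℤ × ℤ) × Set (ℤ × ℤ)) // {w | e (w, s.1) ∈ s.2.1} = B} = 𝔠 := by
  have hc : #(Set (ℤ × ℤ)) = 𝔠 := by simp
  refine le_antisymm ((mk_subtype_le _).trans ?_) ?_
  · simp only [mk_prod, hc, lift_id, continuum_mul_self]
    exact (mul_le_mul_left (lt_aleph0_of_finite K).le _).trans aleph0_mul_continuum.le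
  · obtain ⟨j⟩ := ‹Nonempty K›
    rw [← hc]
    refine mk_le_of_injective (f := fun c : Set (ℤ × ℤ) =>
      ⟨(j, ((fun w => e (w, j)) '' B, c)), ?_⟩) fun c c' h => ?_
    · ext w
      simp
    · simpa using h

/-- The sites of the model: points of the plane in layers, each of which carries a pattern. The
second set only serves to provide sufficiently many layers with the same pattern. -/
abbrev Site : Type := (ℤ × ℤ) × (Set (ℤ × ℤ) × Set (ℤ × ℤ))

theorem exists_site_perm {m m' n' : ℕ} [NeZero m] [NeZero m'] [NeZero n'] (o o' : ℤ × ℤ)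
    (l l' : Set (ℤ × ℤ) × Set (ℤ × ℤ))
    (h : ∀ w : ℤ × ℤ, (((w.1 * m, w.2 * m) : ℤ × ℤ) + o ∈ l.1 ↔ ((w.1 * m', w.2 * n') : ℤ × ℤ) + o' ∈ l'.1)) :
    ∃ R : Equiv.Perm Site, R (o, l) = (o', l') ∧
      (∀ (v w : ℤ × ℤ) i, R (((w.1 * m, w.2 * m) : ℤ × ℤ) + v, i) =
        (((w.1 * m', w.2 * n') : ℤ × ℤ) + (R (v, i)).1, (R (v, i)).2)) ∧
      ∀ s, (R s).1 ∈ (R s).2.1 ↔ s.1 ∈ s.2.1 := by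
  let e := intProdDivMod m m o
  let e' := intProdDivMod m' n' o'
  obtain ⟨θ, hθ, hθl⟩ := exists_equiv_of_mk_fiber_eq
    (fun s : (Fin m × Fin m) × (Set (ℤ × ℤ) × Set (ℤ × ℤ)) => {w | e (w, s.1) ∈ s.2.1})
    (fun s : (Fin m' × Fin n') × (Set (ℤ × ℤ) × Set (ℤ × ℤ)) => {w | e' (w, s.1) ∈ s.2.1})
    (mk_fiber_pattern e) (mk_fiber_pattern e') (0, l) (0, l') (by
      ext w
      simpa [e, e', intProdDivMod_apply] using h w)
  have he (w w' j) : e (w + w', j) = (w.1 * m, w.2 * m) + e (w', j) := by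
    ext <;> simp [e, intProdDivMod_apply] <;> ring
  have he' (w w' j) : e' (w + w', j) = (w.1 * m', w.2 * n') + e' (w', j) := by
    ext <;> simp [e', intProdDivMod_apply] <;> ring
  let A : ((ℤ × ℤ) × (Fin m × Fin m) × (Set (ℤ × ℤ) × Set (ℤ × ℤ))) ≃ Site :=
    (Equiv.prodAssoc _ _ _).symm.trans (Equiv.prodCongr e (Equiv.refl _))
  let A' : ((ℤ × ℤ) × (Fin m' × Fin n') × (Set (ℤ × ℤ) × Set (ℤ × ℤ))) ≃ Site :=
    (Equiv.prodAssoc _ _ _).symm.trans (Equiv.prodCongr e' (Equiv.refl _))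
  let R : Equiv.Perm Site := A.symm.trans ((Equiv.prodCongr (Equiv.refl _) θ).trans A')
  have hR (w j i) : R (e (w, j), i) = (e' (w, (θ (j, i)).1), (θ (j, i)).2) := by
    have : (e (w, j), i) = A (w, j, i) := rfl
    rw [this]
    simp only [R, Equiv.trans_apply, Equiv.symm_apply_apply]
    rfl
  have hsurj (v) : ∃ w j, v = e (w, j) := by
    obtain ⟨⟨w, j⟩, h⟩ := e.surjective v
    exact ⟨w, j, h.symm⟩
  refine ⟨R, ?_, fun v w i => ?_, fun ⟨v, i⟩ => ?_⟩
  · have := hR 0 0 l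
    rw [hθl] at this
    have h0 : e (0, 0) = o := by
      rw [intProdDivMod_apply]
      ext <;> simp
    have h0' : e' (0, 0) = o' := by
      rw [intProdDivMod_apply]
      ext <;> simp
    rwa [h0, h0'] at this
  · obtain ⟨w', j, rfl⟩ := hsurj v
    rw [← he, hR, hR, he']
  · obtain ⟨w, j, rfl⟩ := hsurj v
    rw [hR]
    exact Set.ext_iff.1 (hθ (j, i)) w

/-- Permutations of the fibres over the sites. -/
def fiberwise : (Site → Equiv.Perm ℤ) →* Equiv.Perm (Site × ℤ) where
  toFun σ := Equiv.prodCongrRight σ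
  map_one' := rfl
  map_mul' _ _ := rfl

theorem fiberwise_injective : Function.Injective fiberwise := by
  intro σ τ h
  ext s n
  exact congrArg Prod.snd (DFunLike.congr_fun h (s, n))

/-- The lift of a permutation of the sites. -/
def siteLift : Equiv.Perm Site →* Equiv.Perm (Site × ℤ) where
  toFun R := Equiv.prodCongr R (Equiv.refl _)
  map_one' := rfl
  map_mul' _ _ := rfl

theorem siteLift_mul_fiberwise (R : Equiv.Perm Site) (σ τ : Site → Equiv.Perm ℤ)
    (h : ∀ s, τ (R s) = σ s) : siteLift R * fiberwise σ = fiberwise τ * siteLift R := by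
  ext1 ⟨s, n⟩
  change (R s, σ s n) = (R s, τ (R s) n)
  rw [h]

open Classical in
/-- The permutation which shifts the fibre over the site `s`. -/
noncomputable def shiftAt (s : Site) : Site → Equiv.Perm ℤ :=
  Pi.mulSingle s (Equiv.addRight 1)

open Classical in
/-- The permutation which negates the fibres over the sites belonging to the patterns. -/
noncomputable def negOnPattern : Site → Equiv.Perm ℤ :=
  fun s => if s.1 ∈ s.2.1 then Equiv.neg ℤ else 1

theorem siteLift_mul_shiftAt (R : Equiv.Perm Site) (s : Site) :
    siteLift R * fiberwise (shiftAt s) = fiberwise (shiftAt (R s)) * siteLift R := by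
  classical
  refine siteLift_mul_fiberwise _ _ _ fun s' => ?_
  by_cases h : s' = s
  · subst h
    simp [shiftAt]
  · rw [shiftAt, shiftAt, Pi.mulSingle_eq_of_ne h, Pi.mulSingle_eq_of_ne (R.injective.ne h)]

theorem negOnPattern_mul_shiftAt {s : Site} (h : s.1 ∉ s.2.1) :
    negOnPattern * shiftAt s = shiftAt s * negOnPattern := by
  ext1 s'
  by_cases hs : s' = s
  · subst hs
    simp [negOnPattern, h]
  · simp [shiftAt, Pi.mulSingle_eq_of_ne hs]

theorem commutator_negOnPattern_shiftAt_zpow {s : Site} (h : s.1 ∈ s.2.1) (i : ℤ)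
    (hi : (negOnPattern * shiftAt s * negOnPattern⁻¹ * (shiftAt s)⁻¹) ^ i = 1) : i = 0 := by
  have h1 := congrFun hi s
  have h2 : (negOnPattern * shiftAt s * negOnPattern⁻¹ * (shiftAt s)⁻¹) s = Equiv.addRight (-2) := by
    simp only [Pi.mul_apply, Pi.inv_apply, shiftAt, Pi.mulSingle_eq_same,
      negOnPattern, if_pos h]
    ext n
    change -(-(n - 1) + 1) = n + -2
    ring
  have hpow (n : ℕ) : (Equiv.addRight (-2) ^ n : Equiv.Perm ℤ) 0 = n * -2 := by
    induction n with
    | zero => simp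
    | succ n ih =>
      rw [pow_succ', Equiv.Perm.mul_apply, ih, Equiv.coe_addRight]
      push_cast
      ring
  rw [Pi.pow_apply, h2, Pi.one_apply, ← pow_natAbs_eq_one] at h1
  have h3 := hpow i.natAbs
  rw [h1, Equiv.Perm.one_apply] at h3
  lia

theorem siteLift_add_pow (v : ℤ × ℤ) (n : ℕ) :
    siteLift (Equiv.prodCongr (Equiv.addLeft v) (Equiv.refl _)) ^ n =
      siteLift (Equiv.prodCongr (Equiv.addLeft (n • v)) (Equiv.refl _)) := by
  induction n with
  | zero => 
    rw [pow_zero, zero_smul]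
    ext1 ⟨⟨v, i⟩, n⟩
    change ((v, i), n) = ((0 + v, i), n)
    rw [zero_add]
  | succ n ih =>
    rw [pow_succ, ih, ← map_mul]
    congr 1
    ext1 ⟨w, i⟩
    change (n • v + (v + w), i) = ((n + 1) • v + w, i)
    rw [succ_nsmul, add_assoc]

end Model

theorem ModularMachine.exists_relations {Q ι : Type} (P : ModularMachine Q ι) (start halt : Q)
    {E : Q → ℤ → ℤ → Prop} (hE : P.Invariant E) (hh : ¬ E halt 0 0) :
    ∃ (G : Type) (_ : Group G) (x y k : G) (t : Q → G) (r : ι → G),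
      P.Relations halt x y k t r ∧
      ∀ N : ℕ, E start 0 N → ∀ i : ℤ,
        (k * (y ^ N * t start * (y ^ N)⁻¹) * k⁻¹ * (y ^ N * t start * (y ^ N)⁻¹)⁻¹) ^ i = 1 → i = 0 := by
  let layer : Q → Set (ℤ × ℤ) × Set (ℤ × ℤ) := fun q => ({v | E q v.1 v.2}, ∅)
  have hex (i : ι) := 
    have : NeZero P.m := ⟨P.m_pos.ne'⟩
    have : NeZero (P.m' i) := ⟨(P.m'_pos i).ne'⟩
    have : NeZero (P.n' i) := ⟨(P.n'_pos i).ne'⟩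
    exists_site_perm (m := P.m) (m' := P.m' i) (n' := P.n' i) (P.a i, P.b i) (P.a' i, P.b' i)
      (layer (P.src i)) (layer (P.tgt i)) fun w => by
        have := hE i w.1 w.2
        simpa [layer, add_comm, mul_comm] using this
  choose R hRo hRadd hRpat using hex
  let T (v : ℤ × ℤ) : Equiv.Perm Site := Equiv.prodCongr (Equiv.addLeft v) (Equiv.refl _)
  let x := siteLift (T (1, 0))
  let y := siteLift (T (0, 1))
  let t : Q → Equiv.Perm (Site × ℤ) := fun q => fiberwise (shiftAt (0, layer q))
  have hx (n : ℕ) : x ^ n = siteLift (T (n, 0)) := by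
    simp only [x, T, siteLift_add_pow]
    simp
  have hy (n : ℕ) : y ^ n = siteLift (T (0, n)) := by
    simp only [y, T, siteLift_add_pow]
    simp
  have hxy (α β : ℕ) : x ^ α * y ^ β = siteLift (T (α, β)) := by
    rw [hx, hy, ← map_mul]
    congr 1
    ext1 ⟨w, i⟩
    simp [T, ← add_assoc]
  have hconf (q : Q) (α β : ℕ) : conf x y t q α β = fiberwise (shiftAt ((α, β), layer q)) := by
    rw [conf, hxy, mul_inv_eq_iff_eq_mul, siteLift_mul_shiftAt]
    simp [T]
  refine ⟨Equiv.Perm (Site × ℤ), inferInstance, x, y, fiberwise negOnPattern, t,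
    fun i => siteLift (R i), ⟨?_, fun i => ?_, fun i => ?_, fun i => ?_, fun i => ?_, ?_⟩,
    fun N hN i hi => ?_⟩
  · simp only [x, y, ← map_mul]
    congr 1
    ext1 ⟨v, s⟩
    simp [T, ← add_assoc]
  · rw [hx, hx, ← map_mul, ← map_mul]
    congr 1
    ext1 ⟨v, s⟩
    simpa [T, Prod.map] using hRadd i v (1, 0) s
  · rw [hy, hy, ← map_mul, ← map_mul]
    congr 1
    ext1 ⟨v, s⟩
    simpa [T, Prod.map] using hRadd i v (0, 1) s
  · rw [hconf, hconf, siteLift_mul_shiftAt]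
    have := hRo i
    simp [this]
  · refine siteLift_mul_fiberwise _ _ _ fun s => ?_
    classical exact if_congr (hRpat i s) rfl rfl
  · simp only [t, ← map_mul]
    rw [negOnPattern_mul_shiftAt (s := (0, layer halt)) hh]
  · have h1 := hconf start 0 N
    rw [conf, pow_zero, one_mul] at h1
    rw [h1, ← map_inv, ← map_inv, ← map_mul, ← map_mul, ← map_mul, ← map_zpow] at hi
    refine commutator_negOnPattern_shiftAt_zpow ?_ i (fiberwise_injective (hi.trans (map_one _).symm))
    simpa [layer] using hN

section Transvections

open Matrix

/-- The standard symplectic form on the plane. -/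
def planeForm (u v : ℤ × ℤ) : ℤ := u.1 * v.2 - u.2 * v.1

/-- The `c`-th power of the symplectic transvection along `u`. -/
def planeTransvection (u : ℤ × ℤ) (c : ℤ) : SpecialLinearGroup (Fin 2) ℤ :=
  ⟨!![1 - c * u.1 * u.2, c * u.1 ^ 2; -(c * u.2 ^ 2), 1 + c * u.1 * u.2], by
    rw [det_fin_two_of]
    ring⟩

theorem coe_planeTransvection (u : ℤ × ℤ) (c : ℤ) : (planeTransvection u c : Matrix _ _ ℤ) =
    !![1 - c * u.1 * u.2, c * u.1 ^ 2; -(c * u.2 ^ 2), 1 + c * u.1 * u.2] :=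
  rfl

theorem planeTransvection_add (u : ℤ × ℤ) (c d : ℤ) :
    planeTransvection u (c + d) = planeTransvection u c * planeTransvection u d := by
  ext i j
  fin_cases i <;> fin_cases j <;> simp [coe_planeTransvection] <;> ring

theorem planeTransvection_zero (u : ℤ × ℤ) : planeTransvection u 0 = 1 := by
  ext i j
  fin_cases i <;> fin_cases j <;> simp [planeTransvection]

theorem planeTransvection_inv (u : ℤ × ℤ) (c : ℤ) :
    (planeTransvection u c)⁻¹ = planeTransvection u (-c) := by
  rw [inv_eq_iff_mul_eq_one, ← planeTransvection_add, add_neg_cancel, planeTransvection_zero]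

theorem planeTransvection_pow (u : ℤ × ℤ) (c : ℤ) (n : ℕ) :
    planeTransvection u c ^ n = planeTransvection u (n * c) := by
  induction n with
  | zero => simp [planeTransvection_zero]
  | succ n ih => rw [pow_succ, ih, ← planeTransvection_add, Nat.cast_succ, add_one_mul]

theorem planeTransvection_zpow (u : ℤ × ℤ) (c i : ℤ) :
    planeTransvection u c ^ i = planeTransvection u (i * c) := by
  obtain ⟨n, rfl | rfl⟩ := i.eq_nat_or_neg
  · rw [zpow_natCast, planeTransvection_pow]
  · rw [_root_.zpow_neg, zpow_natCast, planeTransvection_pow, planeTransvection_inv, neg_mul]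

/-- The image of the first basis vector. -/
def firstColumn (g : SpecialLinearGroup (Fin 2) ℤ) : ℤ × ℤ := (g.1 0 0, g.1 1 0)

theorem firstColumn_planeTransvection_mul (u : ℤ × ℤ) (c : ℤ) (g : SpecialLinearGroup (Fin 2) ℤ) :
    firstColumn (planeTransvection u c * g) =
      firstColumn g + (c * planeForm u (firstColumn g)) • u := by
  ext <;> simp [firstColumn, coe_planeTransvection, planeForm, Matrix.mul_apply] <;> ring

/-- The vectors on which `planeForm (u l)` is smaller than all the other `planeForm (u i)`. -/
def closestTo {L : Type} (u : L → ℤ × ℤ) (l : L) : Set (ℤ × ℤ) :=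
  {v | ∀ i, i ≠ l → |planeForm (u l) v| < |planeForm (u i) v|}

theorem add_smul_mem_closestTo {L : Type} {u : L → ℤ × ℤ} {B M : ℤ}
    (hu : ∀ i j, i ≠ j → planeForm (u i) (u j) ≠ 0) (hB : ∀ i j, |planeForm (u i) (u j)| ≤ B)
    (hM : 2 * B + 2 ≤ M) {l j : L} (hlj : j ≠ l) {v : ℤ × ℤ} (hv : v ∈ closestTo u l) {s : ℤ}
    (hs : s ≠ 0) : v + (s * M * planeForm (u j) v) • u j ∈ closestTo u j := by
  intro i hi
  have h1 : planeForm (u j) (v + (s * M * planeForm (u j) v) • u j) = planeForm (u j) v := by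
    simp only [planeForm, Prod.fst_add, Prod.snd_add, Prod.smul_fst, Prod.smul_snd, smul_eq_mul]
    ring
  have h2 : planeForm (u i) (v + (s * M * planeForm (u j) v) • u j) =
      planeForm (u i) v + s * M * planeForm (u j) v * planeForm (u i) (u j) := by
    simp only [planeForm, Prod.fst_add, Prod.snd_add, Prod.smul_fst, Prod.smul_snd, smul_eq_mul]
    ring
  have h3 : planeForm (u i) v * planeForm (u j) (u l) =
      planeForm (u j) v * planeForm (u i) (u l) + planeForm (u l) v * planeForm (u j) (u i) := by
    simp only [planeForm]
    ring
  have hlj' := hv j hlj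
  have h4 : |planeForm (u i) v| ≤ |planeForm (u i) v| * |planeForm (u j) (u l)| :=
    le_mul_of_one_le_right (abs_nonneg _) (Int.one_le_abs (hu j l hlj))
  have hB0 : 0 ≤ B := (abs_nonneg _).trans (hB j l)
  have h5 : |planeForm (u i) v| ≤ 2 * B * |planeForm (u j) v| := by
    calc
      _ ≤ _ := h4
      _ = |planeForm (u j) v * planeForm (u i) (u l) +
          planeForm (u l) v * planeForm (u j) (u i)| := by rw [← abs_mul, h3]
      _ ≤ |planeForm (u j) v| * |planeForm (u i) (u l)| +
          |planeForm (u l) v| * |planeForm (u j) (u i)| := by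
        rw [← abs_mul, ← abs_mul]
        exact abs_add_le _ _
      _ ≤ |planeForm (u j) v| * B + |planeForm (u j) v| * B := by
        gcongr
        · exact hB i l
        · exact hB j i
      _ = 2 * B * |planeForm (u j) v| := by ring
  have hpos : 0 < |planeForm (u j) v| := (abs_nonneg _).trans_lt hlj'
  have h6 : M * |planeForm (u j) v| ≤ |s * M * planeForm (u j) v * planeForm (u i) (u j)| := by
    have hM0 : 0 ≤ M := by lia
    rw [abs_mul, abs_mul, abs_mul, abs_of_nonneg hM0]
    have := Int.one_le_abs hs
    have := Int.one_le_abs (hu i j hi)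
    calc
      _ = 1 * M * |planeForm (u j) v| * 1 := by ring
      _ ≤ _ := by gcongr
  have h7 := abs_sub_abs_le_abs_sub (s * M * planeForm (u j) v * planeForm (u i) (u j))
    (-planeForm (u i) v)
  rw [abs_neg, sub_neg_eq_add, add_comm (s * M * planeForm (u j) v * planeForm (u i) (u j))] at h7
  rw [h1, h2]
  nlinarith

/-- The representation of a free group by powers of transvections. -/
def transvectionRep {L : Type} (u : L → ℤ × ℤ) (M : ℤ) :
    FreeGroup L →* SpecialLinearGroup (Fin 2) ℤ :=
  FreeGroup.lift fun j => planeTransvection (u j) M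

theorem transvectionRep_mk_cons {L : Type} (u : L → ℤ × ℤ) (M : ℤ) (j : L) (b : Bool)
    (w : List (L × Bool)) : transvectionRep u M (FreeGroup.mk ((j, b) :: w)) =
      planeTransvection (u j) (cond b 1 (-1) * M) * transvectionRep u M (FreeGroup.mk w) := by
  rw [transvectionRep, FreeGroup.lift_mk, FreeGroup.lift_mk, List.map_cons, List.prod_cons]
  congr 1
  cases b <;> simp [planeTransvection_inv]

theorem firstColumn_transvectionRep {L : Type} {u : L → ℤ × ℤ} {B M : ℤ} {z : L}
    (hz : u z = (1, 0)) (hu : ∀ i j, i ≠ j → planeForm (u i) (u j) ≠ 0)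
    (hB : ∀ i j, |planeForm (u i) (u j)| ≤ B) (hM : 2 * B + 2 ≤ M) (w : List (L × Bool))
    (hw : FreeGroup.IsReduced w) :
    (∀ a ∈ w, a.1 = z) ∨ ∃ j b w' l v s, w = (j, b) :: w' ∧ j ≠ l ∧ v ∈ closestTo u l ∧
      0 < cond b 1 (-1) * s ∧ firstColumn (transvectionRep u M (FreeGroup.mk w)) =
        v + (s * M * planeForm (u j) v) • u j := by
  have hzz : planeForm (1, 0) (1, 0) = 0 := by simp [planeForm]
  induction w with
  | nil => simp
  | cons a w ih =>
    obtain ⟨j, b⟩ := a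
    have hw' : FreeGroup.IsReduced w := hw.infix (List.suffix_cons _ _).isInfix
    rw [transvectionRep_mk_cons, firstColumn_planeTransvection_mul]
    have hb : 0 < cond b 1 (-1) * cond b (1 : ℤ) (-1) := by cases b <;> simp
    obtain h | ⟨j', b', w', l, v, s, rfl, hl, hv, hs, he⟩ := ih hw'
    · by_cases hj : j = z
      · left
        simpa [hj] using h
      · right
        have he : firstColumn (transvectionRep u M (FreeGroup.mk w)) = (1, 0) := by
          clear ih hw hw'
          induction w with
          | nil => rfl
          | cons a w ih =>
            obtain ⟨j', b'⟩ := a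
            obtain ⟨rfl, h⟩ : j' = z ∧ ∀ a ∈ w, a.1 = z := by simpa using h
            rw [transvectionRep_mk_cons, firstColumn_planeTransvection_mul, ih h, hz, hzz]
            simp
        refine ⟨j, b, w, z, (1, 0), cond b 1 (-1), rfl, hj, fun i hi => ?_, hb, ?_⟩
        · rw [hz, hzz, abs_zero, abs_pos, ← hz]
          exact hu i z hi
        · rw [he]
    · right
      by_cases hj : j = j'
      · subst hj
        obtain rfl : b = b' := (FreeGroup.isReduced_cons_cons.1 hw).1 rfl
        refine ⟨j, b, _, l, v, s + cond b 1 (-1), rfl, hl, hv, ?_, ?_⟩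
        · rw [mul_add]
          exact add_pos hs hb
        · have : planeForm (u j) (v + (s * M * planeForm (u j) v) • u j) = planeForm (u j) v := by
            simp only [planeForm, Prod.fst_add, Prod.snd_add, Prod.smul_fst, Prod.smul_snd,
              smul_eq_mul]
            ring
          rw [he, this]
          module
      · refine ⟨j, b, _, j', _, cond b 1 (-1), rfl, hj,
          add_smul_mem_closestTo hu hB hM hl hv (s := s) ?_, hb, ?_⟩
        · rintro rfl
          simp at hs
        · rw [he]

theorem mem_zpowers_of_transvectionRep {L : Type} {u : L → ℤ × ℤ} {B M : ℤ} {z : L}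
    (hz : u z = (1, 0)) (hu : ∀ i j, i ≠ j → planeForm (u i) (u j) ≠ 0)
    (hB : ∀ i j, |planeForm (u i) (u j)| ≤ B) (hM : 2 * B + 2 ≤ M) (g : FreeGroup L)
    (hg : (transvectionRep u M g).1 1 0 = 0) : g ∈ Subgroup.zpowers (FreeGroup.of z) := by
  classical
  have hform (h : SpecialLinearGroup (Fin 2) ℤ) : planeForm (u z) (firstColumn h) = h.1 1 0 := by
    simp [hz, planeForm, firstColumn]
  obtain h | ⟨j, b, w', l, v, s, hw, hl, hv, hs, he⟩ :=
    firstColumn_transvectionRep hz hu hB hM g.toWord FreeGroup.isReduced_toWord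
  · rw [← FreeGroup.mk_toWord (x := g), ← FreeGroup.lift_of_apply (FreeGroup.mk _),
      FreeGroup.lift_mk]
    refine Subgroup.list_prod_mem _ fun x hx => ?_
    obtain ⟨⟨j, b⟩, ha, rfl⟩ := List.mem_map.1 hx
    obtain rfl : j = z := h _ ha
    cases b
    · exact inv_mem (Subgroup.mem_zpowers _)
    · exact Subgroup.mem_zpowers _
  · exfalso
    have hs' : s ≠ 0 := by
      rintro rfl
      simp at hs
    rw [FreeGroup.mk_toWord] at he
    rw [← hform, he] at hg
    by_cases hj : z = j
    · subst hj
      have : planeForm (u z) (v + (s * M * planeForm (u z) v) • u z) = planeForm (u z) v := by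
        simp only [planeForm, Prod.fst_add, Prod.snd_add, Prod.smul_fst, Prod.smul_snd,
          smul_eq_mul]
        ring
      have h1 := hv z hl
      rw [← this, hg, abs_zero] at h1
      exact (abs_nonneg _).not_gt h1
    · have h1 := add_smul_mem_closestTo hu hB hM hl hv hs' z hj
      rw [hg, abs_zero] at h1
      exact (abs_nonneg _).not_gt h1

theorem exists_transvectionRep {L : Type} [Finite L] (y z : L) (hyz : y ≠ z) :
    ∃ (ρ : FreeGroup L →* SpecialLinearGroup (Fin 2) ℤ) (c d : ℤ),
      (∀ g, (ρ g).1 1 0 = 0 → g ∈ Subgroup.zpowers (FreeGroup.of z)) ∧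
      (∀ N : ℕ, (ρ (FreeGroup.of y ^ N)).1 = !![1, 0; N * c, 1]) ∧
      d ≠ 0 ∧ ∀ i : ℤ, (ρ (FreeGroup.of z ^ i)).1 = !![1, i * d; 0, 1] := by
  classical
  obtain ⟨n, ⟨e⟩⟩ := Finite.exists_equiv_fin L
  let u : L → ℤ × ℤ := fun j => if j = z then (1, 0) else ((e j : ℕ) - (e y : ℕ), 1)
  obtain ⟨B, hB⟩ := (Set.finite_range fun p : L × L => |planeForm (u p.1) (u p.2)|).bddAbove
  have hu (i j) (hij : i ≠ j) : planeForm (u i) (u j) ≠ 0 := by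
    have : (e i : ℕ) ≠ e j := fun h => hij (e.injective (Fin.ext h))
    simp only [u, planeForm]
    split_ifs with h1 h2 h2
    · exact absurd (h1.trans h2.symm) hij
    · simp
    · simp
    · simp
      lia
  have hz : u z = (1, 0) := if_pos rfl
  have hy : u y = (0, 1) := by simp [u, hyz]
  refine ⟨transvectionRep u (2 * B + 2), -(2 * B + 2), 2 * B + 2, fun g hg =>
    mem_zpowers_of_transvectionRep hz hu (fun i j => hB ⟨(i, j), rfl⟩) le_rfl g hg, fun N => ?_, ?_,
    fun i => ?_⟩
  · rw [map_pow, transvectionRep, FreeGroup.lift_apply_of, planeTransvection_pow, hy]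
    simp [planeTransvection]
    ring
  · have : 0 ≤ B := (abs_nonneg _).trans (hB ⟨(y, z), rfl⟩)
    lia
  · rw [map_zpow, transvectionRep, FreeGroup.lift_apply_of, planeTransvection_zpow, hz]
    simp [planeTransvection]

theorem exists_transvectionRep_injective (L : Type) [Finite L] :
    ∃ ρ : FreeGroup L →* SpecialLinearGroup (Fin 2) ℤ, ∀ g, (ρ g).1 1 0 = 0 → g = 1 := by
  obtain ⟨ρ, -, -, h, -⟩ := exists_transvectionRep (L := Option (Option L)) (some none) none nofun
  refine ⟨ρ.comp (FreeGroup.map fun a => some (some a)), fun g hg => ?_⟩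
  obtain ⟨i, hi⟩ := h _ hg
  have := congrArg (FreeGroup.lift fun a : Option (Option L) =>
    a.elim 1 fun a => a.elim 1 FreeGroup.of) hi
  have h1 : (FreeGroup.lift fun a : Option (Option L) => a.elim 1 fun a => a.elim 1 FreeGroup.of).comp
      (FreeGroup.map fun a => some (some a)) = MonoidHom.id (FreeGroup L) := by
    ext a
    simp
  rw [map_zpow, FreeGroup.lift_apply_of, Option.elim_none, _root_.one_zpow] at this
  rw [this]
  exact (DFunLike.congr_fun h1 g).symm

end Transvections

section CornerRepresentation

open Matrix

/-- The symmetric square of the standard representation. -/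
def symSquare : SpecialLinearGroup (Fin 2) ℤ →* Matrix (Fin 3) (Fin 3) ℤ where
  toFun A := !![A 0 0 ^ 2, A 0 0 * A 0 1, A 0 1 ^ 2;
    2 * A 0 0 * A 1 0, A 0 0 * A 1 1 + A 0 1 * A 1 0, 2 * A 0 1 * A 1 1;
    A 1 0 ^ 2, A 1 0 * A 1 1, A 1 1 ^ 2]
  map_one' := by
    ext i j
    fin_cases i <;> fin_cases j <;> simp
  map_mul' A B := by
    ext i j
    fin_cases i <;> fin_cases j <;>
      simp [Matrix.mul_apply, Fin.sum_univ_two, Fin.sum_univ_three] <;> ring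

theorem symSquare_apply (A : SpecialLinearGroup (Fin 2) ℤ) :
    symSquare A = !![A 0 0 ^ 2, A 0 0 * A 0 1, A 0 1 ^ 2;
      2 * A 0 0 * A 1 0, A 0 0 * A 1 1 + A 0 1 * A 1 0, 2 * A 0 1 * A 1 1;
      A 1 0 ^ 2, A 1 0 * A 1 1, A 1 1 ^ 2] :=
  rfl

/-- The block sum of two symmetric squares and a trivial representation. -/
def symSquareSum (κ : Type) [Fintype κ] [DecidableEq κ] :
    SpecialLinearGroup (Fin 2) ℤ × SpecialLinearGroup (Fin 2) ℤ →*
      Matrix ((Fin 3 ⊕ Fin 3) ⊕ κ) ((Fin 3 ⊕ Fin 3) ⊕ κ) ℤ where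
  toFun p := fromBlocks (fromBlocks (symSquare p.1) 0 0 (symSquare p.2)) 0 0 1
  map_one' := by simp
  map_mul' p q := by simp [fromBlocks_multiply]

theorem symSquareSum_apply (κ : Type) [Fintype κ] [DecidableEq κ]
    (p : SpecialLinearGroup (Fin 2) ℤ × SpecialLinearGroup (Fin 2) ℤ) : symSquareSum κ p =
      fromBlocks (fromBlocks (symSquare p.1) 0 0 (symSquare p.2)) 0 0 1 :=
  rfl

/-- Conjugation by an invertible matrix. -/
def conjRep {G ι : Type} [Monoid G] [Fintype ι] [DecidableEq ι] (D : G →* Matrix ι ι ℤ)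
    (S T : Matrix ι ι ℤ) (h : T * S = 1) : G →* Matrix ι ι ℤ where
  toFun g := S * D g * T
  map_one' := by rw [map_one, mul_one, mul_eq_one_comm.1 h]
  map_mul' g g' := by
    rw [map_mul]
    simp only [Matrix.mul_assoc, ← Matrix.mul_assoc T S, h, Matrix.one_mul]

theorem exists_conj_entry {ι : Type} [Fintype ι] [DecidableEq ι] {r r' c c' : ι} (hr : r ≠ r')
    (hc : c ≠ c') (hrc' : r ≠ c') (hr'c : r' ≠ c) (hr'c' : r' ≠ c') :
    ∃ S T : Matrix ι ι ℤ, T * S = 1 ∧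
      ∀ D : Matrix ι ι ℤ, (S * D * T) r c = D r c + D r' c + D r c' + D r' c' := by
  refine ⟨transvection r r' 1 * transvection c' c (-1), transvection c' c 1 * transvection r r' (-1),
    ?_, fun D => ?_⟩
  · rw [Matrix.mul_assoc, ← Matrix.mul_assoc (transvection r r' (-1)),
      transvection_mul_transvection_same _ _ hr, neg_add_cancel, transvection_zero, Matrix.one_mul,
      transvection_mul_transvection_same _ _ hc.symm, add_neg_cancel, transvection_zero]
  · rw [Matrix.mul_assoc, Matrix.mul_assoc, transvection_mul_apply_same,
      transvection_mul_apply_of_ne _ _ _ _ hrc', transvection_mul_apply_of_ne _ _ _ _ hr'c',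
      ← Matrix.mul_assoc, mul_transvection_apply_of_ne _ _ _ _ hr'c.symm,
      mul_transvection_apply_of_ne _ _ _ _ hr'c.symm, mul_transvection_apply_same,
      mul_transvection_apply_same]
    ring

theorem exists_equiv_fin_apply_eq {α : Type} [Fintype α] [DecidableEq α] {n : ℕ}
    (h : Fintype.card α = n) {a b : α} (hab : a ≠ b) {i j : Fin n} (hij : i ≠ j) :
    ∃ e : α ≃ Fin n, e a = i ∧ e b = j := by
  let e := (Fintype.equivFinOfCardEq h).trans (Equiv.swap (Fintype.equivFinOfCardEq h a) i)
  have ha : e a = i := by simp [e]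
  refine ⟨e.trans (Equiv.swap (e b) j), ?_, by simp⟩
  rw [Equiv.trans_apply, ha]
  exact Equiv.swap_apply_of_ne_of_ne (fun h' => hab (e.injective (ha.trans h'))) hij

theorem exists_cornerRep (n : ℕ) (hn : 6 ≤ n) (i j : Fin n) (hij : i ≠ j) :
    ∃ Φ : SpecialLinearGroup (Fin 2) ℤ × SpecialLinearGroup (Fin 2) ℤ →* Matrix (Fin n) (Fin n) ℤ,
      (∀ p, Φ p i j = p.1 1 0 ^ 2 + p.2 1 0 ^ 2) ∧ (∀ p, Φ p = 1 → p.1 0 1 = 0) ∧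
      ∀ B (c : ℤ), ∃ C₀ C₁ C₂ : Matrix (Fin n) (Fin n) ℤ, ∀ (N : ℕ) (A : SpecialLinearGroup (Fin 2) ℤ),
        A.1 = !![1, 0; N * c, 1] → Φ (A, B) = C₀ + (N : ℤ) • C₁ + ((N : ℤ) ^ 2) • C₂ := by
  have hcard : Fintype.card ((Fin 3 ⊕ Fin 3) ⊕ Fin (n - 6)) = n := by
    simp
    lia
  obtain ⟨e, rfl, rfl⟩ := exists_equiv_fin_apply_eq hcard (a := Sum.inl (Sum.inl 2))
    (b := Sum.inl (Sum.inl 0)) (by simp) hij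
  obtain ⟨S, T, hTS, hST⟩ := exists_conj_entry (ι := (Fin 3 ⊕ Fin 3) ⊕ Fin (n - 6))
    (r := Sum.inl (Sum.inl 2)) (c := Sum.inl (Sum.inl 0)) (r' := Sum.inl (Sum.inr 2))
    (c' := Sum.inl (Sum.inr 0)) (by simp) (by simp) (by simp) (by simp) (by simp)
  let ψ := conjRep (symSquareSum (Fin (n - 6))) S T hTS
  have hψ (p) : ψ p = S * symSquareSum (Fin (n - 6)) p * T := rfl
  have hre : Function.Injective (reindexAlgEquiv ℤ ℤ e) := AlgEquiv.injective _
  refine ⟨((reindexAlgEquiv ℤ ℤ e : _ →* _)).comp ψ, fun p => ?_, fun p hp => ?_, fun B c => ?_⟩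
  · change (S * symSquareSum (Fin (n - 6)) p * T) (e.symm (e _)) (e.symm (e _)) = _
    rw [Equiv.symm_apply_apply, Equiv.symm_apply_apply, hST]
    simp [symSquareSum_apply, symSquare_apply]
  · have h1 : ψ p = 1 := hre (hp.trans (map_one _).symm)
    have h2 : symSquareSum (Fin (n - 6)) p = 1 := by
      have : T * (S * symSquareSum (Fin (n - 6)) p * T) * S = T * 1 * S := by rw [← hψ, h1]
      simpa only [Matrix.mul_assoc, ← Matrix.mul_assoc T S, hTS, Matrix.one_mul, Matrix.mul_one]
        using this
    have h3 := congrFun₂ h2 (Sum.inl (Sum.inl 0)) (Sum.inl (Sum.inl 2))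
    simpa [symSquareSum_apply, symSquare_apply] using h3
  · let Z (X : Matrix (Fin 3) (Fin 3) ℤ) (Y : Matrix (Fin 3) (Fin 3) ℤ)
        (W : Matrix (Fin (n - 6)) (Fin (n - 6)) ℤ) :=
      reindexAlgEquiv ℤ ℤ e (S * fromBlocks (fromBlocks X 0 0 Y) 0 0 W * T)
    refine ⟨Z 1 (symSquare B) 1, Z !![0, 0, 0; 2 * c, 0, 0; 0, c, 0] 0 0,
      Z !![0, 0, 0; 0, 0, 0; c ^ 2, 0, 0] 0 0, fun N A hA => ?_⟩
    have h1 : symSquare A = 1 + (N : ℤ) • !![0, 0, 0; 2 * c, 0, 0; 0, c, 0] +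
        ((N : ℤ) ^ 2) • !![0, 0, 0; 0, 0, 0; c ^ 2, 0, 0] := by
      rw [symSquare_apply]
      simp only [hA]
      ext i j
      fin_cases i <;> fin_cases j <;> simp <;> ring
    have h2 : symSquareSum (Fin (n - 6)) (A, B) =
        fromBlocks (fromBlocks 1 0 0 (symSquare B)) 0 0 1 +
        (N : ℤ) • fromBlocks (fromBlocks !![0, 0, 0; 2 * c, 0, 0; 0, c, 0] 0 0 0) 0 0 0 +
        ((N : ℤ) ^ 2) • fromBlocks (fromBlocks !![0, 0, 0; 0, 0, 0; c ^ 2, 0, 0] 0 0 0) 0 0 0 := by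
      rw [symSquareSum_apply, h1]
      simp [fromBlocks_add, fromBlocks_smul]
    simp only [Z, ← map_smul, ← map_add]
    change reindexAlgEquiv ℤ ℤ e (ψ (A, B)) = _
    rw [hψ, h2]
    simp only [Matrix.mul_add, Matrix.add_mul, Matrix.mul_smul, Matrix.smul_mul]

end CornerRepresentation

section FiberProduct

open FreeGroup (of)

/-- The generators of a group which decides the halting of a modular machine. -/
inductive Letter (Q ι : Type)
  | x
  | y
  | k
  | p
  | z
  | t (q : Q)
  | r (i : ι)

instance (Q ι : Type) [Finite Q] [Finite ι] : Finite (Letter Q ι) :=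
  Finite.of_surjective (α := Fin 5 ⊕ Q ⊕ ι)
    (Sum.elim ![.x, .y, .k, .p, .z] (Sum.elim .t .r)) fun
      | .x => ⟨.inl 0, rfl⟩
      | .y => ⟨.inl 1, rfl⟩
      | .k => ⟨.inl 2, rfl⟩
      | .p => ⟨.inl 3, rfl⟩
      | .z => ⟨.inl 4, rfl⟩
      | .t q => ⟨.inr (.inl q), rfl⟩
      | .r i => ⟨.inr (.inr i), rfl⟩

variable {Q ι : Type} (P : ModularMachine Q ι) (start halt : Q)

namespace ModularMachine

/-- The diagonal generators, together with the pairs of sides of the relations of a modular machine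
and of the definition of `z` as the commutator of `k` with the initial configuration. -/
inductive RelationPair : FreeGroup (Letter Q ι) × FreeGroup (Letter Q ι) → Prop
  | diag (s : Letter Q ι) : RelationPair (of s, of s)
  | xy : RelationPair (of .x * of .y, of .y * of .x)
  | rx (i : ι) : RelationPair (of (.r i) * of .x ^ P.m, of .x ^ P.m' i * of (.r i))
  | ry (i : ι) : RelationPair (of (.r i) * of .y ^ P.m, of .y ^ P.n' i * of (.r i))
  | rconf (i : ι) : RelationPair
      (of (.r i) * conf (of .x) (of .y) (fun q => of (.t q)) (P.src i) (P.a i) (P.b i),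
        conf (of .x) (of .y) (fun q => of (.t q)) (P.tgt i) (P.a' i) (P.b' i) * of (.r i))
  | rk (i : ι) : RelationPair (of (.r i) * of .k, of .k * of (.r i))
  | kt : RelationPair (of .k * of (.t halt), of (.t halt) * of .k)
  | z : RelationPair (of .z, of .k * (of .p * of (.t start) * (of .p)⁻¹) * (of .k)⁻¹ *
      (of .p * of (.t start) * (of .p)⁻¹)⁻¹)

theorem finite_relationPair [Finite Q] [Finite ι] : {u | P.RelationPair start halt u}.Finite := by
  refine Set.Finite.subset (s := Set.range (fun s => (of s, of s)) ∪
    {(of .x * of .y, of .y * of .x)} ∪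
    Set.range (fun i => (of (.r i) * of .x ^ P.m, of .x ^ P.m' i * of (.r i))) ∪
    Set.range (fun i => (of (.r i) * of .y ^ P.m, of .y ^ P.n' i * of (.r i))) ∪
    Set.range (fun i =>
      (of (.r i) * conf (of .x) (of .y) (fun q => of (.t q)) (P.src i) (P.a i) (P.b i),
        conf (of .x) (of .y) (fun q => of (.t q)) (P.tgt i) (P.a' i) (P.b' i) * of (.r i))) ∪
    Set.range (fun i => (of (.r i) * of .k, of .k * of (.r i))) ∪
    {(of .k * of (.t halt), of (.t halt) * of .k)} ∪
    {(of .z, of .k * (of .p * of (.t start) * (of .p)⁻¹) * (of .k)⁻¹ *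
      (of .p * of (.t start) * (of .p)⁻¹)⁻¹)}) ?_ ?_
  · simp only [Set.finite_union, Set.finite_singleton, Set.finite_range, and_self]
  · intro u hu
    cases hu with
    | diag s => exact .inl <| .inl <| .inl <| .inl <| .inl <| .inl <| .inl <| ⟨s, rfl⟩
    | xy => exact .inl <| .inl <| .inl <| .inl <| .inl <| .inl <| .inr rfl
    | rx i => exact .inl <| .inl <| .inl <| .inl <| .inl <| .inr ⟨i, rfl⟩
    | ry i => exact .inl <| .inl <| .inl <| .inl <| .inr ⟨i, rfl⟩
    | rconf i => exact .inl <| .inl <| .inl <| .inr ⟨i, rfl⟩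
    | rk i => exact .inl <| .inl <| .inr ⟨i, rfl⟩
    | kt => exact .inl <| .inr rfl
    | z => exact .inr rfl

/-- The fiber product of the presented group which results from the additional relation
`p = y ^ N`. -/
def fiberProduct (N : ℕ) : Subgroup (FreeGroup (Letter Q ι) × FreeGroup (Letter Q ι)) :=
  Subgroup.closure (insert (of .y ^ N, of .p) {u | P.RelationPair start halt u})

variable {P start halt}

theorem mem_fiberProduct_of_relationPair {N : ℕ}
    {u : FreeGroup (Letter Q ι) × FreeGroup (Letter Q ι)} (hu : P.RelationPair start halt u) :
    u ∈ P.fiberProduct start halt N :=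
  Subgroup.subset_closure (Or.inr hu)

theorem diag_mem_fiberProduct (N : ℕ) (u : FreeGroup (Letter Q ι)) :
    (u, u) ∈ P.fiberProduct start halt N := by
  have : (⊤ : Subgroup (FreeGroup (Letter Q ι))) ≤ (P.fiberProduct start halt N).comap
      ((MonoidHom.id _).prod (MonoidHom.id _)) := by
    rw [← FreeGroup.closure_range_of, Subgroup.closure_le]
    rintro _ ⟨s, rfl⟩
    exact mem_fiberProduct_of_relationPair (.diag s)
  exact this (Subgroup.mem_top u)

variable (P start halt) in
/-- The congruence whose graph is the fiber product. -/
def fiberCon (N : ℕ) : Con (FreeGroup (Letter Q ι)) where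
  r u v := (u, v) ∈ P.fiberProduct start halt N
  iseqv := by
    refine ⟨diag_mem_fiberProduct N, fun {u v} h => ?_, fun {u v w} h h' => ?_⟩
    · have := mul_mem (mul_mem (diag_mem_fiberProduct N u) (inv_mem h)) (diag_mem_fiberProduct N v)
      simpa using this
    · have := mul_mem (mul_mem h (inv_mem (diag_mem_fiberProduct N v))) h'
      simpa using this
  mul' h h' := mul_mem h h'

theorem z_mem_fiberProduct {N : ℕ} (h : P.Halts halt start 0 N) :
    (of .z, 1) ∈ P.fiberProduct start halt N := by
  let c := P.fiberCon start halt N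
  let π : FreeGroup (Letter Q ι) →* c.Quotient := c.mk'
  have hπ {u v} (huv : P.RelationPair start halt (u, v)) : π u = π v :=
    (Con.eq c).2 (mem_fiberProduct_of_relationPair huv)
  have hconf (q α β) : π (conf (of .x) (of .y) (fun q => of (.t q)) q α β) =
      conf (π (of .x)) (π (of .y)) (fun q => π (of (.t q))) q α β := by
    simp [conf]
  have hR : P.Relations halt (π (of .x)) (π (of .y)) (π (of .k)) (fun q => π (of (.t q)))
      (fun i => π (of (.r i))) :=
    ⟨by simpa using hπ .xy, fun i => by simpa using hπ (.rx i), fun i => by simpa using hπ (.ry i),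
      fun i => by simpa [hconf] using hπ (.rconf i), fun i => by simpa using hπ (.rk i),
      by simpa using hπ .kt⟩
  have hp : π (of .y ^ N) = π (of .p) := (Con.eq c).2 (Subgroup.subset_closure (Or.inl rfl))
  have hz := hπ .z
  have h1 := hR.commute_conf h
  have h2 : conf (π (of .x)) (π (of .y)) (fun q => π (of (.t q))) start 0 N =
      π (of .p) * π (of (.t start)) * (π (of .p))⁻¹ := by
    rw [conf, pow_zero, one_mul, ← map_pow, hp]
  rw [h2] at h1
  simp only [map_mul, map_inv] at hz
  rw [h1.eq, mul_inv_cancel_right, mul_inv_cancel, ← map_one π] at hz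
  exact (Con.eq c).1 hz

theorem commutator_zpow_eq_one_of_mem_fiberProduct {G : Type} [Group G] {x y k : G} {t : Q → G} {r : ι → G}
    (hR : P.Relations halt x y k t r) {N : ℕ} {i : ℤ}
    (h : (of .z ^ i, 1) ∈ P.fiberProduct start halt N) :
    (k * (y ^ N * t start * (y ^ N)⁻¹) * k⁻¹ * (y ^ N * t start * (y ^ N)⁻¹)⁻¹) ^ i = 1 := by
  let φ : FreeGroup (Letter Q ι) →* G := FreeGroup.lift fun
    | .x => x
    | .y => y
    | .k => k
    | .p => y ^ N
    | .z => k * (y ^ N * t start * (y ^ N)⁻¹) * k⁻¹ * (y ^ N * t start * (y ^ N)⁻¹)⁻¹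
    | .t q => t q
    | .r i => r i
  have hconf (q α β) : φ (conf (of .x) (of .y) (fun q => of (.t q)) q α β) = conf x y t q α β := by
    simp [conf, φ]
  have hφ (u) (hu : u ∈ insert (of .y ^ N, of .p) {u | P.RelationPair start halt u}) :
      φ u.1 = φ u.2 := by
    obtain rfl | hu := hu
    · simp [φ]
    · cases hu with
      | diag s => rfl
      | xy => simpa [φ] using hR.xy
      | rx i => simpa [φ] using hR.rx i
      | ry i => simpa [φ] using hR.ry i
      | rconf i =>
        have hr : φ (of (.r i)) = r i := by simp [φ]
        simpa only [map_mul, hconf, hr] using hR.rconf i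
      | rk i => simpa [φ] using hR.rk i
      | kt => simpa [φ] using hR.kt
      | z => simp [φ]
  have hle : P.fiberProduct start halt N ≤
      (φ.comp (MonoidHom.fst _ _)).eqLocus (φ.comp (MonoidHom.snd _ _)) :=
    (Subgroup.closure_le _).2 hφ
  have : φ (of .z ^ i) = φ 1 := hle h
  rw [map_zpow, map_one] at this
  simpa only [φ, FreeGroup.lift_apply_of] using this

end ModularMachine

end FiberProduct

section CornerLists

open FreeGroup (of)

/-- Undecidability of the corner problem, for the corner `(i, j)` and for a primitive recursive
sequence of lists of matrices. -/
theorem exists_primrec_cornerLists (n : ℕ) (hn : 6 ≤ n) (i j : Fin n) (hij : i ≠ j) :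
    ∃ (X : ℕ → List (Matrix (Fin n) (Fin n) ℚ)) (p : ℕ → Prop), Primrec X ∧ ¬ ComputablePred p ∧
      (∀ a, ∀ M ∈ X a, IsUnit M) ∧
      ∀ a, p a ↔ ∃ g ∈ Subgroup.closure
        {g : GL (Fin n) ℚ | (g : Matrix (Fin n) (Fin n) ℚ) ∈ X a},
        g ≠ 1 ∧ (g : Matrix (Fin n) (Fin n) ℚ) i j = 0 := by
  obtain ⟨Q, ι, _, _, P, start, halt, N, E, hN, hE, hEh, hES, hund⟩ :=
    ModularMachine.exists_undecidable
  obtain ⟨ρ₁, c, d, hρz, hρy, hd, hρd⟩ :=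
    exists_transvectionRep (L := Letter Q ι) .y .z (by simp)
  obtain ⟨ρ₂, hρ₂⟩ := exists_transvectionRep_injective (Letter Q ι)
  obtain ⟨Φ, hΦc, hΦ1, hΦq⟩ := exists_cornerRep n hn i j hij
  obtain ⟨C₀, C₁, C₂, hC⟩ := hΦq (ρ₂ (of .p)) c
  let Ψ : FreeGroup (Letter Q ι) × FreeGroup (Letter Q ι) →* GL (Fin n) ℚ :=
    ((((Int.castRingHom ℚ).mapMatrix :
        Matrix (Fin n) (Fin n) ℤ →+* Matrix (Fin n) (Fin n) ℚ) : _ →* _).comp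
      (Φ.comp (ρ₁.prodMap ρ₂))).toHomUnits
  have hΨ (u v) : (Ψ (u, v)).1 = (Φ (ρ₁ u, ρ₂ v)).map (Int.cast : ℤ → ℚ) := rfl
  have hΨc (u v) : (Ψ (u, v)).1 i j = 0 ↔ (ρ₁ u).1 1 0 = 0 ∧ (ρ₂ v).1 1 0 = 0 := by
    rw [hΨ, Matrix.map_apply, hΦc, Int.cast_eq_zero]
    constructor
    · intro h
      have h1 := sq_nonneg ((ρ₁ u).1 1 0)
      have h2 := sq_nonneg ((ρ₂ v).1 1 0)
      constructor <;> exact pow_eq_zero_iff two_ne_zero |>.1 (by linarith)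
    · rintro ⟨h, h'⟩
      have h : (ρ₁ u) 1 0 = 0 := h
      have h' : (ρ₂ v) 1 0 = 0 := h'
      simp [h, h']
  have hΨz : Ψ (of .z, 1) ≠ 1 := by
    intro h
    have h1 : (Φ (ρ₁ (of .z), ρ₂ 1)).map (Int.cast : ℤ → ℚ) =
        (1 : Matrix (Fin n) (Fin n) ℤ).map Int.cast := by
      rw [← hΨ, h, Units.val_one, Matrix.map_one _ Int.cast_zero Int.cast_one]
    have h2 := hΦ1 _ (Matrix.map_injective Int.cast_injective h1)
    have h3 := congrFun (congrFun (hρd 1) 0) 1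
    rw [zpow_one] at h3
    exact hd (by simpa using h3.symm.trans h2)
  have hfin := P.finite_relationPair start halt
  let Y : List (Matrix (Fin n) (Fin n) ℚ) := hfin.toFinset.toList.map fun u => (Ψ u).1
  let X (a : ℕ) : List (Matrix (Fin n) (Fin n) ℚ) := (Ψ (of .y ^ N a, of .p)).1 :: Y
  have hX (a) : {g : GL (Fin n) ℚ | (g : Matrix (Fin n) (Fin n) ℚ) ∈ X a} =
      Ψ '' insert (of .y ^ N a, of .p) {u | P.RelationPair start halt u} := by
    ext g
    simp only [X, Y, List.mem_cons, List.mem_map, Finset.mem_toList, Set.Finite.mem_toFinset,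
      Set.mem_ofPred_eq, Set.image_insert_eq, Set.mem_insert_iff, Set.mem_image, Units.val_inj]
  refine ⟨X, _, ?_, hund, ?_, fun a => ?_⟩
  · refine Primrec.list_cons.comp (((Primrec.matrix_quadratic C₀ C₁ C₂).comp hN).of_eq
      fun a => ?_) (.const Y)
    rw [hΨ, hC (N a) _ (hρy (N a))]
  · intro a M hM
    obtain rfl | hM := List.mem_cons.1 hM
    · exact Units.isUnit _
    · obtain ⟨u, -, rfl⟩ := List.mem_map.1 hM
      exact Units.isUnit _
  · rw [hX, ← MonoidHom.map_closure]
    constructor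
    · intro h
      refine ⟨_, ⟨_, ModularMachine.z_mem_fiberProduct h, rfl⟩, hΨz, (hΨc _ _).2 ⟨?_, ?_⟩⟩
      · simpa using congrFun (congrFun (hρd 1) 1) 0
      · simp
    · rintro ⟨_, ⟨⟨u, v⟩, hu, rfl⟩, hg, h0⟩
      by_contra hhalt
      obtain ⟨hu0, hv0⟩ := (hΨc u v).1 h0
      obtain ⟨e, rfl⟩ := hρz u hu0
      obtain rfl := hρ₂ v hv0
      obtain ⟨G, _, x, y, k, t, r, hR, hinf⟩ := P.exists_relations start halt hE (hEh 0 0)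
      have he := hinf (N a) (hES a hhalt) e
        (ModularMachine.commutator_zpow_eq_one_of_mem_fiberProduct hR hu)
      refine hg ?_
      simp only [he, zpow_zero]
      exact map_one Ψ

end CornerLists

/-- **Undecidability of the upper-right-corner problem for matrix groups.**
For `n ≥ 9`, there is no computable function that, given a finite list `X` of
invertible `n × n` rational matrices, decides whether the subgroup of
`GL_n(ℚ)` generated by `X` contains a non-identity matrix whose `(1,n)`-entry
is `0`. -/
theorem upper_right_corner_problem_undecidable (n : ℕ) (hn : 9 ≤ n) :
    ¬ ∃ f : List (Matrix (Fin n) (Fin n) ℚ) → Bool, Computable f ∧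
      ∀ X : List (Matrix (Fin n) (Fin n) ℚ), (∀ M ∈ X, IsUnit M) →
        (f X = true ↔
          ∃ g ∈ Subgroup.closure
              {g : GL (Fin n) ℚ | (g : Matrix (Fin n) (Fin n) ℚ) ∈ X},
            g ≠ 1 ∧
            (g : Matrix (Fin n) (Fin n) ℚ) ⟨0, by omega⟩ ⟨n - 1, by omega⟩ = 0) := by
  rintro ⟨f, hf, h⟩
  obtain ⟨X, p, hX, hp, hunit, hXp⟩ := exists_primrec_cornerLists n (by omega)
    ⟨0, by omega⟩ ⟨n - 1, by omega⟩ (by simp [Fin.ext_iff]; omega)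
  refine hp (ComputablePred.computable_iff.2 ⟨fun a => f (X a), hf.comp hX.to_comp, ?_⟩)
  funext a
  exact propext ((hXp a).trans (h (X a) (hunit a)).symm)
end
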